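/- arXiv:2508.10209 — 2 statements merged into one kernel-verified Lean document; each statement's English description precedes it below -/
import Mathlib

section
/- For every n ≥ 3, there exists a relatively cancellative element S ∈ P_{fin,0}(ℕ₀) with length set L(S) = {2, n}. -/
open Pointwise

/-- `X` is an atom (indecomposable element) of the monoid `P_{fin,0}(ℕ)` of finite
subsets of ℕ containing 0 under sumset addition. -/
def IsAtomP (X : Finset ℕ) : Prop :=
  0 ∈ X ∧ X ≠ {0} ∧
    ∀ A B : Finset ℕ, 0 ∈ A → 0 ∈ B → X = A + B → A = {0} ∨ B = {0}

/-- The length set of `X` in `P_{fin,0}(ℕ)`: the set of `n` such that `X` is a sum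
of `n` atoms. -/
def LengthSet (X : Finset ℕ) : Set ℕ :=
  {n | ∃ l : Multiset (Finset ℕ), Multiset.card l = n ∧ (∀ U ∈ l, IsAtomP U) ∧ l.sum = X}

/-- `X` is relatively cancellative in `P_{fin,0}(ℕ)`. -/
def RelCancel (X : Finset ℕ) : Prop :=
  ∀ B C D : Finset ℕ, 0 ∈ B → 0 ∈ C → 0 ∈ D → X = B + C → X = B + D → C = D

/-- `C` and `D` are relatively prime in `P_{fin,0}(ℕ)`: their only common divisor is `{0}`. -/
def RelPrime (C D : Finset ℕ) : Prop :=
  ∀ T : Finset ℕ, 0 ∈ T → (∃ C' : Finset ℕ, 0 ∈ C' ∧ C = T + C') →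
    (∃ D' : Finset ℕ, 0 ∈ D' ∧ D = T + D') → T = {0}


section Transfer

variable {M : Type*} [AddCommMonoid M] [DecidableEq M]

/-- Atoms of the monoid of finite subsets containing `0` of a commutative monoid. -/
def IsSetAtom (X : Finset M) : Prop :=
  0 ∈ X ∧ X ≠ {0} ∧
    ∀ A B : Finset M, 0 ∈ A → 0 ∈ B → X = A + B → A = {0} ∨ B = {0}

lemma subset_add_of_zero_mem_right {A B : Finset M} (hB : 0 ∈ B) : A ⊆ A + B :=
  fun x hx => by simpa using Finset.add_mem_add hx hB

lemma subset_add_of_zero_mem_left {A B : Finset M} (hA : 0 ∈ A) : B ⊆ A + B :=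
  fun x hx => by simpa using Finset.add_mem_add hA hx

lemma image_injective_of_injOn {φ : M →+ ℕ} {S A B : Finset M}
    (hφ : Set.InjOn φ (S + S : Finset M)) (hA : A ⊆ S + S) (hB : B ⊆ S + S)
    (h : A.image φ = B.image φ) : A = B := by
  apply Finset.coe_injective
  refine (hφ.image_eq_image_iff (by exact_mod_cast hA) (by exact_mod_cast hB)).1 ?_
  exact_mod_cast h

lemma exists_lift_add {φ : M →+ ℕ} {S : Finset M} (hS : 0 ∈ S)
    (hφ : Set.InjOn φ (S + S : Finset M)) {A' B' : Finset ℕ} (hA : 0 ∈ A') (hB : 0 ∈ B')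
    (h : S.image φ = A' + B') :
    ∃ A B : Finset M, 0 ∈ A ∧ 0 ∈ B ∧ A ⊆ S ∧ B ⊆ S ∧ S = A + B ∧
      A.image φ = A' ∧ B.image φ = B' := by
  have hlift : ∀ C : Finset ℕ, C ⊆ S.image φ → (S.filter (φ · ∈ C)).image φ = C := by
    intro C hC
    ext y
    simp only [Finset.mem_image, Finset.mem_filter]
    constructor
    · rintro ⟨x, ⟨-, hx⟩, rfl⟩
      exact hx
    · intro hy
      obtain ⟨x, hx, rfl⟩ := Finset.mem_image.1 (hC hy)
      exact ⟨x, ⟨hx, hy⟩, rfl⟩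
  have hA' := hlift A' (h ▸ subset_add_of_zero_mem_right hB)
  have hB' := hlift B' (h ▸ subset_add_of_zero_mem_left hA)
  refine ⟨_, _, ?_, ?_, Finset.filter_subset _ _, Finset.filter_subset _ _, ?_, hA', hB'⟩
  · simp [hS, hA]
  · simp [hS, hB]
  · refine image_injective_of_injOn hφ (subset_add_of_zero_mem_left hS)
      (Finset.add_subset_add (Finset.filter_subset _ _) (Finset.filter_subset _ _)) ?_
    rw [Finset.image_add, hA', hB', h]

lemma isAtomP_image_iff {φ : M →+ ℕ} {S : Finset M} (hS : 0 ∈ S)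
    (hφ : Set.InjOn φ (S + S : Finset M)) : IsAtomP (S.image φ) ↔ IsSetAtom S := by
  have hzero : ∀ A ⊆ S, A.image φ = {0} → A = {0} := by
    intro A hA h
    refine image_injective_of_injOn hφ (hA.trans (subset_add_of_zero_mem_left hS)) ?_ (by simpa)
    simpa using subset_add_of_zero_mem_left hS hS
  constructor
  · rintro ⟨-, h1, h2⟩
    refine ⟨hS, fun h => h1 (by simp [h]), fun A B hA hB hAB => ?_⟩
    refine (h2 (A.image φ) (B.image φ) (Finset.mem_image.2 ⟨0, hA, map_zero φ⟩)
      (Finset.mem_image.2 ⟨0, hB, map_zero φ⟩) (by rw [← Finset.image_add, hAB])).imp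
      (hzero A ?_) (hzero B ?_)
    · exact hAB ▸ subset_add_of_zero_mem_right hB
    · exact hAB ▸ subset_add_of_zero_mem_left hA
  · rintro ⟨-, h1, h2⟩
    refine ⟨Finset.mem_image.2 ⟨0, hS, map_zero φ⟩, fun h => h1 (hzero S subset_rfl h),
      fun A' B' hA' hB' h => ?_⟩
    obtain ⟨A, B, hA, hB, -, -, hAB, rfl, rfl⟩ := exists_lift_add hS hφ hA' hB' h
    exact (h2 A B hA hB hAB).imp (by rintro rfl; simp) (by rintro rfl; simp)

lemma zero_mem_multiset_sum {l : Multiset (Finset M)} (hl : ∀ U ∈ l, 0 ∈ U) : 0 ∈ l.sum := by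
  induction l using Multiset.induction with
  | empty => simp
  | cons U l ih =>
    rw [Multiset.sum_cons]
    simpa using Finset.add_mem_add (hl U (by simp)) (ih fun V hV => hl V (by simp [hV]))

lemma subset_multiset_sum {l : Multiset (Finset M)} (hl : ∀ U ∈ l, 0 ∈ U) {U : Finset M}
    (hU : U ∈ l) : U ⊆ l.sum := by
  obtain ⟨t, rfl⟩ := Multiset.exists_cons_of_mem hU
  rw [Multiset.sum_cons]
  exact subset_add_of_zero_mem_right (zero_mem_multiset_sum fun V hV => hl V (by simp [hV]))

lemma exists_lift_multiset_sum {φ : M →+ ℕ} {l : Multiset (Finset ℕ)} (hl : ∀ U ∈ l, 0 ∈ U)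
    {S : Finset M} (hS : 0 ∈ S) (hφ : Set.InjOn φ (S + S : Finset M))
    (h : l.sum = S.image φ) :
    ∃ l' : Multiset (Finset M), l'.map (Finset.image φ) = l ∧ l'.sum = S ∧ ∀ U ∈ l', 0 ∈ U := by
  induction l using Multiset.induction generalizing S with
  | empty =>
    refine ⟨0, by simp, ?_, by simp⟩
    refine image_injective_of_injOn hφ ?_ (subset_add_of_zero_mem_left hS) ?_
    · simpa using subset_add_of_zero_mem_left hS hS
    · rw [← h, Multiset.sum_zero]
      simp
      rfl
  | cons U l ih =>
    rw [Multiset.sum_cons] at h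
    have hl' : ∀ V ∈ l, 0 ∈ V := fun V hV => hl V (by simp [hV])
    obtain ⟨A, B, hA, hB, -, hBS, rfl, rfl, hB'⟩ :=
      exists_lift_add hS hφ (hl U (by simp)) (zero_mem_multiset_sum hl') h.symm
    obtain ⟨l', h1, h2, h3⟩ := ih hl' hB
      (hφ.mono (by exact_mod_cast Finset.add_subset_add hBS hBS)) hB'.symm
    refine ⟨A ::ₘ l', by simp [h1], by simp [h2], ?_⟩
    simpa [hA] using h3

lemma lengthSet_image {φ : M →+ ℕ} {S : Finset M} (hS : 0 ∈ S)
    (hφ : Set.InjOn φ (S + S : Finset M)) :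
    LengthSet (S.image φ) =
      {n | ∃ l : Multiset (Finset M), l.card = n ∧ (∀ U ∈ l, IsSetAtom U) ∧ l.sum = S} := by
  have hiff : ∀ l : Multiset (Finset M), (∀ U ∈ l, 0 ∈ U) → l.sum = S → ∀ U ∈ l,
      (IsAtomP (U.image φ) ↔ IsSetAtom U) := by
    intro l hl h U hU
    have := h ▸ subset_multiset_sum hl hU
    exact isAtomP_image_iff (hl U hU)
      (hφ.mono (by exact_mod_cast Finset.add_subset_add this this))
  ext n
  constructor
  · rintro ⟨l, hn, hl, h⟩
    obtain ⟨l', rfl, h', hl'⟩ := exists_lift_multiset_sum (fun U hU => (hl U hU).1) hS hφ h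
    refine ⟨l', by simpa using hn, fun U hU => ?_, h'⟩
    exact (hiff l' hl' h' U hU).1 (hl _ (Multiset.mem_map_of_mem _ hU))
  · rintro ⟨l, hn, hl, h⟩
    refine ⟨l.map (Finset.image φ), by simpa using hn, ?_, ?_⟩
    · simp only [Multiset.mem_map]
      rintro _ ⟨U, hU, rfl⟩
      exact (hiff l (fun U hU => (hl U hU).1) h U hU).2 (hl U hU)
    · exact h ▸ (map_multiset_sum (Finset.imageAddMonoidHom φ) l).symm

lemma relCancel_image {φ : M →+ ℕ} {S : Finset M} (hS : 0 ∈ S)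
    (hφ : Set.InjOn φ (S + S : Finset M))
    (hsat : ∀ B C : Finset M, 0 ∈ B → 0 ∈ C → S = B + C → ∀ c, (∀ b ∈ B, b + c ∈ S) → c ∈ C) :
    RelCancel (S.image φ) := by
  intro B' C' D' hB' hC' hD' h1 h2
  obtain ⟨B, C, hB, hC, hBS, hCS, hBC, rfl, rfl⟩ := exists_lift_add hS hφ hB' hC' h1
  obtain ⟨B₂, D, -, hD, hBS₂, hDS, hBD, hBB, rfl⟩ := exists_lift_add hS hφ hB' hD' h2
  have hsub := subset_add_of_zero_mem_left (B := S) hS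
  obtain rfl := image_injective_of_injOn hφ (hBS₂.trans hsub) (hBS.trans hsub) hBB
  congr 1
  apply Finset.Subset.antisymm
  · exact fun c hc => hsat B₂ D hB hD hBD c fun b hb => hBC ▸ Finset.add_mem_add hb hc
  · exact fun c hc => hsat B₂ C hB hC hBC c fun b hb => hBD ▸ Finset.add_mem_add hb hc

end Transfer

section Model

variable {m : ℕ}

/-- Every element of `A` has first coordinate `0`. -/
def IsFlat (A : Finset (ℕ × (Fin m → ℕ))) : Prop := ∀ x ∈ A, x.1 = 0

/-- The part of `A` with first coordinate `0`. -/
def lowPart (A : Finset (ℕ × (Fin m → ℕ))) : Finset (ℕ × (Fin m → ℕ)) := A.filter (·.1 = 0)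

/-- The box `[0, u]` at height `0`. -/
def flatBox (u : Fin m → ℕ) : Finset (ℕ × (Fin m → ℕ)) := {0} ×ˢ Finset.Iic u

/-- The sum of `flatBox u` and `{0} ∪ {1} × [0, 1] ∪ {(2, 1)}`. -/
def tower (u : Fin m → ℕ) : Finset (ℕ × (Fin m → ℕ)) :=
  {0} ×ˢ Finset.Iic u ∪ {1} ×ˢ Finset.Iic (1 + u) ∪ {2} ×ˢ Finset.Icc 1 (1 + u)

lemma mem_flatBox {u v : Fin m → ℕ} {k : ℕ} : (k, v) ∈ flatBox u ↔ k = 0 ∧ v ≤ u := by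
  simp only [flatBox, Finset.mem_product, Finset.mem_singleton, Finset.mem_Iic]

lemma mem_tower {u v : Fin m → ℕ} {k : ℕ} :
    (k, v) ∈ tower u ↔
      k = 0 ∧ v ≤ u ∨ k = 1 ∧ v ≤ 1 + u ∨ k = 2 ∧ 1 ≤ v ∧ v ≤ 1 + u := by
  simp only [tower, Finset.mem_union, Finset.mem_product, Finset.mem_singleton, Finset.mem_Iic,
    Finset.mem_Icc, or_assoc]

lemma mem_lowPart {A : Finset (ℕ × (Fin m → ℕ))} {k : ℕ} {v : Fin m → ℕ} :
    (k, v) ∈ lowPart A ↔ (k, v) ∈ A ∧ k = 0 := by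
  simp [lowPart]

lemma mem_add_iff {A B : Finset (ℕ × (Fin m → ℕ))} {k : ℕ} {v : Fin m → ℕ} :
    (k, v) ∈ A + B ↔
      ∃ i a j b, (i, a) ∈ A ∧ (j, b) ∈ B ∧ i + j = k ∧ a + b = v := by
  simp only [Finset.mem_add, Prod.exists, Prod.mk_add_mk, Prod.mk.injEq]
  tauto

lemma mk_mem_add {A B : Finset (ℕ × (Fin m → ℕ))} {i j : ℕ} {a b : Fin m → ℕ}
    (ha : (i, a) ∈ A) (hb : (j, b) ∈ B) : (i + j, a + b) ∈ A + B :=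
  Finset.add_mem_add ha hb

lemma lowPart_add (A B : Finset (ℕ × (Fin m → ℕ))) :
    lowPart (A + B) = lowPart A + lowPart B := by
  ext ⟨k, v⟩
  simp only [mem_lowPart, mem_add_iff]
  constructor
  · rintro ⟨⟨i, a, j, b, ha, hb, hk, hv⟩, rfl⟩
    exact ⟨i, a, j, b, ⟨ha, by omega⟩, ⟨hb, by omega⟩, hk, hv⟩
  · rintro ⟨i, a, j, b, ⟨ha, hi⟩, ⟨hb, hj⟩, hk, hv⟩
    exact ⟨⟨i, a, j, b, ha, hb, hk, hv⟩, by omega⟩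

lemma IsFlat.lowPart_eq {A : Finset (ℕ × (Fin m → ℕ))} (hA : IsFlat A) : lowPart A = A :=
  Finset.filter_true_of_mem hA

lemma zero_mem_lowPart {A : Finset (ℕ × (Fin m → ℕ))} (hA : 0 ∈ A) : 0 ∈ lowPart A := by
  simp [lowPart, hA]

lemma lowPart_tower (u : Fin m → ℕ) : lowPart (tower u) = flatBox u := by
  ext ⟨k, v⟩
  simp only [mem_lowPart, mem_tower, mem_flatBox]
  grind

lemma flatBox_zero : flatBox (0 : Fin m → ℕ) = {0} := by
  ext ⟨k, v⟩
  simp [mem_flatBox, Prod.ext_iff]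

lemma flatBox_injective : Function.Injective (flatBox : (Fin m → ℕ) → _) := by
  intro u v h
  refine le_antisymm ?_ ?_
  · exact (mem_flatBox.1 (h ▸ mem_flatBox.2 ⟨rfl, le_rfl⟩ : (0, u) ∈ flatBox v)).2
  · exact (mem_flatBox.1 (h ▸ mem_flatBox.2 ⟨rfl, le_rfl⟩ : (0, v) ∈ flatBox u)).2

lemma zero_mem_tower (u : Fin m → ℕ) : 0 ∈ tower u :=
  mem_tower.2 (.inl ⟨rfl, zero_le⟩)

lemma zero_mem_flatBox (u : Fin m → ℕ) : 0 ∈ flatBox u :=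
  mem_flatBox.2 ⟨rfl, zero_le⟩

lemma flatBox_add (u v : Fin m → ℕ) : flatBox (u + v) = flatBox u + flatBox v := by
  ext ⟨k, x⟩
  simp only [mem_add_iff, mem_flatBox]
  constructor
  · rintro ⟨rfl, hx⟩
    refine ⟨0, x ⊓ u, 0, x - x ⊓ u, ⟨rfl, inf_le_right⟩, ⟨rfl, fun i => ?_⟩, rfl, ?_⟩
    · have := hx i
      simp at this ⊢
      omega
    · exact add_tsub_cancel_of_le inf_le_left
  · rintro ⟨i, a, j, b, ⟨rfl, ha⟩, ⟨rfl, hb⟩, rfl, rfl⟩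
    exact ⟨rfl, add_le_add ha hb⟩

lemma flatBox_add_tower (u v : Fin m → ℕ) : flatBox u + tower v = tower (u + v) := by
  ext ⟨k, x⟩
  simp only [mem_add_iff, mem_flatBox, mem_tower]
  constructor
  · rintro ⟨i, a, j, b, ⟨rfl, ha⟩, hb, rfl, rfl⟩
    simp only [Pi.le_def, Pi.add_apply, Pi.one_apply] at *
    rcases hb with ⟨rfl, hb⟩ | ⟨rfl, hb⟩ | ⟨rfl, hb, hb'⟩
    · exact .inl ⟨rfl, fun i => by grind⟩
    · exact .inr (.inl ⟨rfl, fun i => by grind⟩)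
    · exact .inr (.inr ⟨rfl, fun i => by grind, fun i => by grind⟩)
  · intro h
    refine ⟨0, x - x ⊓ (if k = 0 then v else 1 + v), k, x ⊓ (if k = 0 then v else 1 + v),
      ⟨rfl, ?_⟩, ?_, by simp, tsub_add_cancel_of_le inf_le_left⟩
    · rcases h with ⟨rfl, h⟩ | ⟨rfl, h⟩ | ⟨rfl, -, h⟩ <;> intro i <;> have := h i <;>
        simp at this ⊢ <;> omega
    · rcases h with ⟨rfl, h⟩ | ⟨rfl, h⟩ | ⟨rfl, h', h⟩
      · simp
      · simp
      · simp [h']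

lemma eq_flatBox_of_add_eq_flatBox {A B : Finset (ℕ × (Fin m → ℕ))} {u : Fin m → ℕ}
    (hu : u ≤ 1) (h : A + B = flatBox u) :
    ∃ a b, A = flatBox a ∧ B = flatBox b ∧ a + b = u := by
  have hmem : ∀ {x}, x ∈ A + B ↔ x ∈ flatBox u := by simp [h]
  obtain ⟨i, a, j, b, ha, hb, hij, hab⟩ := mem_add_iff.1 (hmem.2 (mem_flatBox.2 ⟨rfl, le_rfl⟩))
  obtain ⟨rfl, rfl⟩ : i = 0 ∧ j = 0 := by omega
  have hAle : ∀ k v, (k, v) ∈ A → k = 0 ∧ v ≤ a := by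
    intro k v hv
    have := mem_flatBox.1 (hmem.1 (mk_mem_add hv hb))
    exact ⟨this.1, le_of_add_le_add_right (hab ▸ this.2)⟩
  have hBle : ∀ k v, (k, v) ∈ B → k = 0 ∧ v ≤ b := by
    intro k v hv
    have := mem_flatBox.1 (hmem.1 (mk_mem_add ha hv))
    exact ⟨by omega, le_of_add_le_add_left (hab ▸ this.2)⟩
  have key : ∀ v ≤ u, ∃ x y, (0, x) ∈ A ∧ (0, y) ∈ B ∧ x + y = v ∧ x ≤ a ∧ y ≤ b := by
    intro v hv
    obtain ⟨i, x, j, y, hx, hy, hij, hxy⟩ := mem_add_iff.1 (hmem.2 (mem_flatBox.2 ⟨rfl, hv⟩))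
    obtain ⟨rfl, hxa⟩ := hAle _ _ hx
    obtain ⟨rfl, hyb⟩ := hBle _ _ hy
    exact ⟨x, y, hx, hy, hxy, hxa, hyb⟩
  have hab' : ∀ i, a i + b i ≤ 1 := fun i => by
    have := hu i
    rw [← hab] at this
    simpa using this
  refine ⟨a, b, ?_, ?_, hab⟩
  · ext ⟨k, v⟩
    rw [mem_flatBox]
    refine ⟨hAle k v, ?_⟩
    rintro ⟨rfl, hv⟩
    obtain ⟨x, y, hx, hy, rfl, hxa, hyb⟩ := key v (hab ▸ hv.trans le_self_add)
    have : y = 0 := by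
      ext i
      have h1 := hab' i
      have h2 := hv i
      have h3 : y i ≤ b i := hyb i
      simp at h2 ⊢
      omega
    simpa [this] using hx
  · ext ⟨k, v⟩
    rw [mem_flatBox]
    refine ⟨hBle k v, ?_⟩
    rintro ⟨rfl, hv⟩
    obtain ⟨x, y, hx, hy, rfl, hxa, hyb⟩ := key v (hab ▸ hv.trans le_add_self)
    have : x = 0 := by
      ext i
      have h1 := hab' i
      have h2 := hv i
      have h3 : x i ≤ a i := hxa i
      simp at h2 ⊢
      omega
    simpa [this] using hy

lemma lowPart_eq_of_add_eq_tower {A B : Finset (ℕ × (Fin m → ℕ))} {u : Fin m → ℕ}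
    (hu : u ≤ 1) (h : A + B = tower u) :
    ∃ a b, lowPart A = flatBox a ∧ lowPart B = flatBox b ∧ a + b = u :=
  eq_flatBox_of_add_eq_flatBox hu (by rw [← lowPart_add, h, lowPart_tower])

lemma eq_tower_of_isFlat_add {A B : Finset (ℕ × (Fin m → ℕ))} (hA : 0 ∈ A)
    (hflat : IsFlat A) (h : A + B = tower 1) :
    ∃ a b, A = flatBox a ∧ B = tower b ∧ a + b = 1 := by
  obtain ⟨a, b, hAa, hBb, hab⟩ := lowPart_eq_of_add_eq_tower le_rfl h
  rw [hflat.lowPart_eq] at hAa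
  subst hAa
  refine ⟨a, b, rfl, ?_, hab⟩
  have hab' : ∀ i, a i + b i = 1 := fun i => by simpa using congrFun hab i
  have hmem : ∀ {x}, x ∈ flatBox a + B ↔ x ∈ tower 1 := by simp [h]
  have hle : ∀ k v, (k, v) ∈ B → (k, v) ∈ tower b := by
    intro k v hv
    have h0 := mem_tower.1 (hmem.1 (mk_mem_add hA hv))
    have h1 := mem_tower.1 (hmem.1 (mk_mem_add (mem_flatBox.2 ⟨rfl, le_rfl⟩) hv))
    rw [mem_tower]
    simp only [Pi.le_def, Pi.add_apply, Pi.one_apply, zero_add] at *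
    rcases h1 with ⟨rfl, h1⟩ | ⟨rfl, h1⟩ | ⟨rfl, -, h1⟩
    · exact .inl ⟨rfl, fun i => by grind⟩
    · exact .inr (.inl ⟨rfl, fun i => by grind⟩)
    · refine .inr (.inr ⟨rfl, ?_, fun i => by grind⟩)
      simp only [false_and, OfNat.ofNat_ne_zero, OfNat.ofNat_ne_one, true_and,
        false_or] at h0
      exact h0.1
  ext ⟨k, v⟩
  refine ⟨hle k v, fun hvt => ?_⟩
  rcases mem_tower.1 hvt with ⟨rfl, hv⟩ | ⟨rfl, hv⟩ | ⟨rfl, hv', hv⟩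
  · exact (mem_lowPart.1 (hBb ▸ mem_flatBox.2 ⟨rfl, hv⟩ : (0, v) ∈ lowPart B)).1
  · have : (1, v + v ⊓ a) ∈ tower (1 : Fin m → ℕ) := by
      refine mem_tower.2 (.inr (.inl ⟨rfl, fun i => ?_⟩))
      have h1 := hv i
      have h2 := hab' i
      simp at h1 ⊢
      omega
    obtain ⟨i, x, j, y, hx, hy, hij, hxy⟩ := mem_add_iff.1 (hmem.2 this)
    obtain ⟨rfl, hxa⟩ := mem_flatBox.1 hx
    obtain rfl : j = 1 := by omega
    convert hy using 2
    have hy' := mem_tower.1 (hle _ _ hy)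
    simp only [one_ne_zero, false_and, true_and, false_or, OfNat.one_ne_ofNat, or_false] at hy'
    ext i
    have h1 := hv i
    have h2 := hab' i
    have h3 : x i ≤ a i := hxa i
    have h4 := hy' i
    have h5 := congrFun hxy i
    simp at h1 h4 h5
    omega
  · have : (2, v) ∈ tower (1 : Fin m → ℕ) := by
      refine mem_tower.2 (.inr (.inr ⟨rfl, hv', fun i => ?_⟩))
      have h1 := hv i
      have h2 := hab' i
      simp at h1 ⊢
      omega
    obtain ⟨i, x, j, y, hx, hy, hij, hxy⟩ := mem_add_iff.1 (hmem.2 this)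
    obtain ⟨rfl, hxa⟩ := mem_flatBox.1 hx
    obtain rfl : j = 2 := by omega
    convert hy using 2
    have hy' := mem_tower.1 (hle _ _ hy)
    simp only [OfNat.ofNat_ne_zero, false_and, true_and, false_or, OfNat.ofNat_ne_one] at hy'
    ext i
    have h1 := hv i
    have h2 := hab' i
    have h3 : x i ≤ a i := hxa i
    have h4 := hy'.1 i
    have h5 := congrFun hxy i
    simp at h1 h4 h5
    omega

lemma exists_one_mem {P Q : Finset (ℕ × (Fin m → ℕ))} {u : Fin m → ℕ} (h : P + Q = tower u)
    (hP : ¬ IsFlat P) (hQ : ¬ IsFlat Q) : ∃ v, (1, v) ∈ P := by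
  simp only [IsFlat, not_forall, Prod.exists] at hP hQ
  obtain ⟨i, x, hx, hi⟩ := hP
  obtain ⟨j, y, hy, hj⟩ := hQ
  have := mem_tower.1 (h ▸ mk_mem_add hx hy)
  obtain rfl : i = 1 := by omega
  exact ⟨x, hx⟩

lemma eq_one_of_top_mem {P Q : Finset (ℕ × (Fin m → ℕ))} {u p₀ q₁ x : Fin m → ℕ}
    (hm : 2 ≤ m) (hu : u ≤ 1) (h : P + Q = tower u)
    (hp₀ : (0, p₀) ∈ P) (hq₁ : (1, q₁) ∈ Q) (htop : p₀ + q₁ = 1 + u) (hx : (1, x) ∈ P) :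
    u = 1 := by
  obtain ⟨p, q, hPp, hQq, hpq⟩ := lowPart_eq_of_add_eq_tower hu h
  have hmem : ∀ {x}, x ∈ P + Q ↔ x ∈ tower u := by simp [h]
  have hPlow : ∀ v, (0, v) ∈ P ↔ v ≤ p := fun v => by
    simpa [mem_lowPart, mem_flatBox] using Finset.ext_iff.1 hPp (0, v)
  have hQlow : ∀ v, (0, v) ∈ Q ↔ v ≤ q := fun v => by
    simpa [mem_lowPart, mem_flatBox] using Finset.ext_iff.1 hQq (0, v)
  have hpq' : ∀ i, p i + q i = u i := fun i => by simpa using congrFun hpq i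
  have htop' : ∀ i, p₀ i + q₁ i = 1 + u i := fun i => by simpa using congrFun htop i
  have hp₀' := (hPlow p₀).1 hp₀
  have hlevel : ∀ y z : Fin m → ℕ, (1, y) ∈ P → (1, z) ∈ Q →
      ∀ i, 1 ≤ y i + z i ∧ y i + z i ≤ 1 + u i := by
    intro y z hy hz i
    have := mem_tower.1 (hmem.1 (mk_mem_add hy hz))
    simp only [Nat.reduceAdd, OfNat.ofNat_ne_zero, false_and, OfNat.ofNat_ne_one, true_and,
      false_or] at this
    exact ⟨this.1 i, this.2 i⟩
  have hPle : ∀ y, (1, y) ∈ P → ∀ i, y i ≤ p i := by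
    intro y hy i
    have h1 := hlevel y q₁ hy hq₁ i
    have h2 := htop' i
    have h3 : p₀ i ≤ p i := hp₀' i
    omega
  have hQge : ∀ z, (1, z) ∈ Q → ∀ i, 1 ≤ z i + p i := by
    intro z hz i
    have h1 := hlevel x z hx hz i
    have h2 := hPle x hx i
    omega
  have hcover : ∀ v ≤ 1 + u, v ≤ u ∨ ∃ y z, y + z = v ∧ y ≤ p ∧ ∀ i, 1 ≤ z i + p i := by
    intro v hv
    obtain ⟨i, y, j, z, hy, hz, hij, rfl⟩ :=
      mem_add_iff.1 (hmem.2 (mem_tower.2 (.inr (.inl ⟨rfl, hv⟩))))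
    obtain ⟨rfl, rfl⟩ | ⟨rfl, rfl⟩ : i = 0 ∧ j = 1 ∨ i = 1 ∧ j = 0 := by omega
    · exact .inr ⟨y, z, rfl, (hPlow y).1 hy, hQge z hz⟩
    · exact .inl (hpq ▸ add_le_add (hPle y hy) ((hQlow z).1 hz))
  by_contra hne
  obtain ⟨i, hi⟩ : ∃ i, u i = 0 := by
    by_contra! hcon
    refine hne (le_antisymm hu fun i => ?_)
    exact Nat.one_le_iff_ne_zero.2 (hcon i)
  have : Nontrivial (Fin m) := Fin.nontrivial_iff_two_le.2 hm
  obtain ⟨j, hj⟩ := exists_ne i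
  have huj : u j = 1 := by
    rcases hcover (Pi.single i 1) (fun k => by by_cases hk : k = i <;> simp [hk]) with
      hv | ⟨y, z, hyz, -, hz⟩
    · simpa [hi] using hv i
    · have h1 := congrFun hyz j
      have h2 := hz j
      have h3 := hpq' j
      have h4 := hu j
      simp [hj] at h1 h4
      omega
  rcases hcover (Pi.single j 2) (fun k => by by_cases hk : k = j <;> simp [hk, huj]) with
    hv | ⟨y, z, hyz, -, hz⟩
  · simpa [huj] using hv j
  · have h1 := congrFun hyz i
    have h2 := hz i
    have h3 := hpq' i
    simp [hj.symm] at h1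
    omega

lemma eq_one_of_not_isFlat {P Q : Finset (ℕ × (Fin m → ℕ))} {u : Fin m → ℕ}
    (hm : 2 ≤ m) (hu : u ≤ 1) (h : P + Q = tower u)
    (hPf : ¬ IsFlat P) (hQf : ¬ IsFlat Q) : u = 1 := by
  obtain ⟨x, hx⟩ := exists_one_mem h hPf hQf
  obtain ⟨y, hy⟩ := exists_one_mem (add_comm P Q ▸ h) hQf hPf
  obtain ⟨i, v, j, w, hv, hw, hij, hvw⟩ :=
    mem_add_iff.1 (h ▸ mem_tower.2 (.inr (.inl ⟨rfl, le_rfl⟩)) : (1, 1 + u) ∈ P + Q)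
  obtain ⟨rfl, rfl⟩ | ⟨rfl, rfl⟩ : i = 0 ∧ j = 1 ∨ i = 1 ∧ j = 0 := by omega
  · exact eq_one_of_top_mem hm hu h hv hw hvw hx
  · exact eq_one_of_top_mem hm hu (add_comm P Q ▸ h) hw hv (add_comm v w ▸ hvw) hy

lemma eq_zero_of_lowPart_eq_zero {A B : Finset (ℕ × (Fin m → ℕ))} (hA : 0 ∈ A) (hB : 0 ∈ B)
    (h : lowPart (A + B) = {0}) (hflat : IsFlat A) : A = {0} := by
  refine Finset.Subset.antisymm ?_ (by simpa using hA)
  rw [lowPart_add, hflat.lowPart_eq] at h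
  exact h ▸ subset_add_of_zero_mem_right (zero_mem_lowPart hB)

lemma isSetAtom_tower_zero (hm : 2 ≤ m) : IsSetAtom (tower (0 : Fin m → ℕ)) := by
  have hlow := lowPart_tower (0 : Fin m → ℕ)
  rw [flatBox_zero] at hlow
  refine ⟨zero_mem_tower 0, ?_, fun A B hA hB h => ?_⟩
  · intro h
    have : (1, 0) ∈ tower (0 : Fin m → ℕ) := mem_tower.2 (.inr (.inl ⟨rfl, zero_le⟩))
    simp [h, Prod.ext_iff] at this
  · by_cases hAf : IsFlat A
    · exact .inl (eq_zero_of_lowPart_eq_zero hA hB (h ▸ hlow) hAf)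
    by_cases hBf : IsFlat B
    · exact .inr (eq_zero_of_lowPart_eq_zero hB hA (add_comm A B ▸ h ▸ hlow) hBf)
    have := congrFun (eq_one_of_not_isFlat hm zero_le h.symm hAf hBf) ⟨0, by omega⟩
    simp at this

lemma IsSetAtom.eq_zero_of_tower {u : Fin m → ℕ} (h : IsSetAtom (tower u)) : u = 0 := by
  rcases h.2.2 (flatBox u) (tower 0) (zero_mem_flatBox u) (zero_mem_tower 0)
    (by rw [flatBox_add_tower, add_zero]) with h | h
  · exact flatBox_injective (h.trans flatBox_zero.symm)
  · have : (1, 0) ∈ tower (0 : Fin m → ℕ) := mem_tower.2 (.inr (.inl ⟨rfl, zero_le⟩))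
    simp [h, Prod.ext_iff] at this

lemma isSetAtom_flatBox_single (i : Fin m) : IsSetAtom (flatBox (Pi.single i 1)) := by
  refine ⟨zero_mem_flatBox _, ?_, fun A B hA hB h => ?_⟩
  · rw [← flatBox_zero]
    intro h
    simpa using congrFun (flatBox_injective h) i
  · obtain ⟨a, b, rfl, rfl, hab⟩ := eq_flatBox_of_add_eq_flatBox
      (fun j => by by_cases hj : j = i <;> simp [hj]) h.symm
    have hzero : ∀ c : Fin m → ℕ, c ≤ Pi.single i 1 → c i = 0 → flatBox c = {0} := by
      intro c hc hci
      rw [← flatBox_zero]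
      congr 1
      ext j
      by_cases hj : j = i
      · simp [hj, hci]
      · simpa [hj] using hc j
    have hi := congrFun hab i
    simp only [Pi.add_apply, Pi.single_eq_same] at hi
    rcases Nat.eq_zero_or_pos (a i) with h0 | h0
    · exact .inl (hzero a (hab ▸ le_self_add) h0)
    · exact .inr (hzero b (hab ▸ le_add_self) (by omega))

lemma IsSetAtom.sum_eq_one_of_flatBox {u : Fin m → ℕ}
    (h : IsSetAtom (flatBox u)) : ∑ i, u i = 1 := by
  obtain ⟨i, hi⟩ : ∃ i, u i ≠ 0 := by
    by_contra! hcon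
    exact h.2.1 (by rw [← flatBox_zero, show u = 0 from funext hcon])
  have hsplit : u = Pi.single i 1 + (u - Pi.single i 1) := by
    refine (add_tsub_cancel_of_le fun j => ?_).symm
    by_cases hj : j = i
    · subst hj
      simpa using Nat.one_le_iff_ne_zero.2 hi
    · simp [hj]
  rcases h.2.2 _ _ (zero_mem_flatBox _) (zero_mem_flatBox _)
    ((congrArg flatBox hsplit).trans (flatBox_add _ _)) with h0 | h0
  · exact absurd h0 (isSetAtom_flatBox_single i).2.1
  · rw [← flatBox_zero] at h0
    rw [hsplit, flatBox_injective h0]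
    simp

lemma card_eq_sum_of_sum_eq_flatBox {l : Multiset (Finset (ℕ × (Fin m → ℕ)))}
    (hl : ∀ U ∈ l, IsSetAtom U) {u : Fin m → ℕ} (hu : u ≤ 1) (h : l.sum = flatBox u) :
    l.card = ∑ i, u i := by
  induction l using Multiset.induction generalizing u with
  | empty =>
    have : u = 0 := flatBox_injective (by rw [← h, flatBox_zero]; rfl)
    simp [this]
  | cons U l ih =>
    have hl' : ∀ V ∈ l, IsSetAtom V := fun V hV => hl V (by simp [hV])
    have hU := hl U (by simp)
    rw [Multiset.sum_cons] at h
    obtain ⟨a, b, rfl, hb, rfl⟩ := eq_flatBox_of_add_eq_flatBox hu h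
    rw [Multiset.card_cons, ih hl' (le_add_self.trans hu) hb]
    simp only [Pi.add_apply, Finset.sum_add_distrib]
    rw [hU.sum_eq_one_of_flatBox, add_comm]

lemma mem_of_add_subset_tower {B C : Finset (ℕ × (Fin m → ℕ))} (hB : 0 ∈ B)
    (h : tower 1 = B + C) (c : ℕ × (Fin m → ℕ)) (hc : ∀ b ∈ B, b + c ∈ tower 1) : c ∈ C := by
  obtain ⟨k, v⟩ := c
  have hc0 := hc 0 hB
  rw [zero_add] at hc0
  by_cases hBf : IsFlat B
  · obtain ⟨a, b, rfl, rfl, hab⟩ := eq_tower_of_isFlat_add hB hBf h.symm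
    have hca := hc (0, a) (mem_flatBox.2 ⟨rfl, le_rfl⟩)
    rw [Prod.mk_add_mk, mem_tower] at hca
    rw [mem_tower] at hc0 ⊢
    have hab' : ∀ i, a i + b i = 1 := fun i => by simpa using congrFun hab i
    simp only [Pi.le_def, Pi.add_apply, Pi.one_apply, zero_add] at *
    rcases hc0 with ⟨rfl, h0⟩ | ⟨rfl, h0⟩ | ⟨rfl, h0, h0'⟩
    · exact .inl ⟨rfl, fun i => by grind⟩
    · exact .inr (.inl ⟨rfl, fun i => by grind⟩)
    · exact .inr (.inr ⟨rfl, h0, fun i => by grind⟩)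
  have hmem : ∀ {x}, x ∈ B + C ↔ x ∈ tower 1 := by simp [h]
  obtain ⟨p, q, hBp, hCq, hpq⟩ := lowPart_eq_of_add_eq_tower le_rfl h.symm
  have hpB := (mem_lowPart.1 (hBp ▸ mem_flatBox.2 ⟨rfl, le_rfl⟩ : (0, p) ∈ lowPart B)).1
  simp only [IsFlat, not_forall, Prod.exists] at hBf
  obtain ⟨i, x, hx, hi⟩ := hBf
  have hcx := mem_tower.1 (hc _ hx)
  have hk := mem_tower.1 hc0
  obtain rfl | rfl : k = 0 ∨ k = 1 := by omega
  · have hcp := mem_tower.1 (hc _ hpB)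
    simp only [add_zero, true_and, zero_ne_one, false_and, OfNat.zero_ne_ofNat, or_self,
      or_false, ← hpq] at hcp
    exact (mem_lowPart.1 (hCq ▸ mem_flatBox.2 ⟨rfl, le_of_add_le_add_left hcp⟩ :
      (0, v) ∈ lowPart C)).1
  · have hBle : ∀ j y, (j, y) ∈ B → j ≤ 1 := by
      intro j y hy
      have := mem_tower.1 (hc _ hy)
      omega
    have htwo : ∀ y : Fin m → ℕ, (2, y) ∈ tower (1 : Fin m → ℕ) ↔ ∀ i, 1 ≤ y i ∧ y i ≤ 2 := by
      intro y
      simp [mem_tower, Pi.le_def, forall_and]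
    obtain rfl : i = 1 := by have := hBle _ _ hx; omega
    have hCle : ∀ j y, (j, y) ∈ C → j ≤ 1 := by
      intro j y hy
      have := mem_tower.1 (hmem.1 (mk_mem_add hx hy))
      omega
    have key : ∀ y : Fin m → ℕ, (∀ i, 1 ≤ y i ∧ y i ≤ 2) →
        ∃ b c, (1, b) ∈ B ∧ (1, c) ∈ C ∧ b + c = y := by
      intro y hy
      obtain ⟨i, b, j, c, hb, hc, hij, hbc⟩ := mem_add_iff.1 (hmem.2 ((htwo y).2 hy))
      have := hBle _ _ hb
      have := hCle _ _ hc
      obtain ⟨rfl, rfl⟩ : i = 1 ∧ j = 1 := by omega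
      exact ⟨b, c, hb, hc, hbc⟩
    have hBC : ∀ b c, (1, b) ∈ B → (1, c) ∈ C → ∀ i, 1 ≤ b i + c i ∧ b i + c i ≤ 2 :=
      fun b c hb hc => (htwo _).1 (hmem.1 (mk_mem_add hb hc))
    have hBv : ∀ b, (1, b) ∈ B → ∀ i, 1 ≤ b i + v i ∧ b i + v i ≤ 2 :=
      fun b hb => (htwo _).1 (hc _ hb)
    obtain ⟨b₁, c₁, hb₁, hc₁, h₁⟩ := key 1 (by simp)
    obtain ⟨b₂, c₂, hb₂, hc₂, h₂⟩ := key 2 (by simp)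
    obtain ⟨b₃, c₃, hb₃, hc₃, h₃⟩ := key (b₁ + v) (hBv b₁ hb₁)
    convert hc₃ using 2
    ext i
    have e1 := congrFun h₁ i
    have e2 := congrFun h₂ i
    have e3 := congrFun h₃ i
    have i1 := hBC b₁ c₂ hb₁ hc₂ i
    have i2 := hBC b₂ c₁ hb₂ hc₁ i
    have i3 := hBC b₁ c₃ hb₁ hc₃ i
    have i4 := hBC b₂ c₃ hb₂ hc₃ i
    have i5 := hBC b₃ c₁ hb₃ hc₁ i
    have i6 := hBC b₃ c₂ hb₃ hc₂ i
    have i7 := hBv b₂ hb₂ i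
    have i8 := hBv b₁ hb₁ i
    simp at e1 e2 e3
    omega

lemma isFlat_multiset_sum {l : Multiset (Finset (ℕ × (Fin m → ℕ)))}
    (hl : ∀ U ∈ l, IsFlat U) : IsFlat l.sum := by
  induction l using Multiset.induction with
  | empty => simp [IsFlat]
  | cons U l ih =>
    rw [Multiset.sum_cons]
    intro x hx
    obtain ⟨y, hy, z, hz, rfl⟩ := Finset.mem_add.1 hx
    simp [hl U (by simp) y hy, ih (fun V hV => hl V (by simp [hV])) z hz]

lemma exists_card_le_of_not_isFlat {l : Multiset (Finset (ℕ × (Fin m → ℕ)))}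
    (hl : ∀ U ∈ l, ¬ IsFlat U) : ∃ x ∈ l.sum, l.card ≤ x.1 := by
  induction l using Multiset.induction with
  | empty => simp
  | cons U l ih =>
    obtain ⟨x, hx, hle⟩ := ih fun V hV => hl V (by simp [hV])
    have hU := hl U (by simp)
    simp only [IsFlat, not_forall] at hU
    obtain ⟨y, hy, hne⟩ := hU
    refine ⟨y + x, by simpa using Finset.add_mem_add hy hx, ?_⟩
    simp only [Multiset.card_cons, Prod.fst_add]
    omega

lemma card_of_sum_eq_tower (hm : 2 ≤ m) {l : Multiset (Finset (ℕ × (Fin m → ℕ)))}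
    (hl : ∀ U ∈ l, IsSetAtom U) (h : l.sum = tower 1) : l.card = 2 ∨ l.card = m + 1 := by
  classical
  set F := l.filter IsFlat with hF
  set R := l.filter (fun U => ¬ IsFlat U) with hR
  have hFR : F + R = l := Multiset.filter_add_not _ _
  have hFa : ∀ U ∈ F, IsSetAtom U := fun U hU => hl U (Multiset.mem_of_mem_filter hU)
  have hRa : ∀ U ∈ R, IsSetAtom U := fun U hU => hl U (Multiset.mem_of_mem_filter hU)
  have hRf : ∀ U ∈ R, ¬ IsFlat U := fun U hU => (Multiset.mem_filter.1 hU).2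
  rw [← hFR, Multiset.sum_add] at h
  obtain ⟨a, b, hFs, hRs, hab⟩ := eq_tower_of_isFlat_add
    (zero_mem_multiset_sum fun U hU => (hFa U hU).1)
    (isFlat_multiset_sum fun U hU => (Multiset.mem_filter.1 hU).2) h
  have hFc := card_eq_sum_of_sum_eq_flatBox hFa (hab ▸ le_self_add) hFs
  have hcard : l.card = F.card + R.card := by rw [← hFR, Multiset.card_add]
  have hR2 : R.card ≤ 2 := by
    obtain ⟨⟨k, v⟩, hx, hle⟩ := exists_card_le_of_not_isFlat hRf
    rw [hRs, mem_tower] at hx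
    simp only at hle
    omega
  have hR0 : R.card ≠ 0 := by
    intro h0
    have : (1, 0) ∈ tower b := mem_tower.2 (.inr (.inl ⟨rfl, zero_le⟩))
    rw [← hRs, Multiset.card_eq_zero.1 h0] at this
    simp [Prod.ext_iff] at this
  obtain h1 | h2 : R.card = 1 ∨ R.card = 2 := by omega
  · right
    obtain ⟨W, hW⟩ := Multiset.card_eq_one.1 h1
    rw [hW, Multiset.sum_singleton] at hRs
    have hb : b = 0 := (hRs ▸ hRa W (by simp [hW])).eq_zero_of_tower
    have ha : a = 1 := by simpa [hb] using hab
    rw [hcard, hFc, h1, ha]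
    simp
  · left
    obtain ⟨P, Q, hPQ⟩ := Multiset.card_eq_two.1 h2
    have hP : P ∈ R := by simp [hPQ]
    have hQ : Q ∈ R := by simp [hPQ]
    rw [hPQ] at hRs
    have hb : b = 1 := eq_one_of_not_isFlat hm (hab ▸ le_add_self)
      (by simpa using hRs) (hRf P hP) (hRf Q hQ)
    have ha : a = 0 := by simpa [hb] using hab
    rw [hcard, hFc, h2, ha]
    simp

lemma exists_card_eq_succ (hm : 2 ≤ m) : ∃ l : Multiset (Finset (ℕ × (Fin m → ℕ))),
    l.card = m + 1 ∧ (∀ U ∈ l, IsSetAtom U) ∧ l.sum = tower 1 := by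
  let f : (Fin m → ℕ) →+ Finset (ℕ × (Fin m → ℕ)) :=
    { toFun := flatBox, map_zero' := flatBox_zero, map_add' := flatBox_add }
  refine ⟨tower 0 ::ₘ Finset.univ.val.map fun i => flatBox (Pi.single i 1), by simp, ?_, ?_⟩
  · simp only [Multiset.mem_cons, Multiset.mem_map]
    rintro U (rfl | ⟨i, -, rfl⟩)
    · exact isSetAtom_tower_zero hm
    · exact isSetAtom_flatBox_single i
  · have : ∑ i, f (Pi.single i 1) = f 1 := by
      rw [← map_sum]
      congr 1
      exact Finset.univ_sum_single (1 : Fin m → ℕ)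
    rw [Multiset.sum_cons, add_comm]
    change ∑ i, f (Pi.single i 1) + tower 0 = tower 1
    rw [this]
    exact (flatBox_add_tower 1 0).trans (by rw [add_zero])

lemma isFlat_or_isFlat {A B X : Finset (ℕ × (Fin m → ℕ))} (hX : ∀ x ∈ X, x.1 ≤ 1)
    (h : X = A + B) : IsFlat A ∨ IsFlat B := by
  by_contra! hcon
  simp only [IsFlat, not_forall] at hcon
  obtain ⟨⟨x, hx, hx'⟩, y, hy, hy'⟩ := hcon
  have := hX _ (h ▸ Finset.add_mem_add hx hy)
  simp only [Prod.fst_add] at this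
  omega

lemma isSetAtom_of_lowPart_eq_zero {X : Finset (ℕ × (Fin m → ℕ))} (hX : ∀ x ∈ X, x.1 ≤ 1)
    (hlow : lowPart X = {0}) (hne : X ≠ {0}) : IsSetAtom X := by
  refine ⟨Finset.mem_of_mem_filter _ (hlow ▸ Finset.mem_singleton_self 0 : 0 ∈ lowPart X), hne,
    fun A B hA hB h => ?_⟩
  refine (isFlat_or_isFlat hX h).imp (eq_zero_of_lowPart_eq_zero hA hB (h ▸ hlow))
    (eq_zero_of_lowPart_eq_zero hB hA (add_comm A B ▸ h ▸ hlow))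

lemma isSetAtom_of_existsUnique {X : Finset (ℕ × (Fin m → ℕ))} (h0 : 0 ∈ X)
    (hX : ∀ x ∈ X, x.1 ≤ 1) (htop : ∃! x, x ∈ X ∧ x.1 = 1) : IsSetAtom X := by
  obtain ⟨t, ⟨ht, ht1⟩, huniq⟩ := htop
  have key : ∀ A B : Finset (ℕ × (Fin m → ℕ)), 0 ∈ A → X = A + B → IsFlat A → A = {0} := by
    intro A B hA h hAf
    refine Finset.eq_singleton_iff_unique_mem.2 ⟨hA, fun a ha => ?_⟩
    obtain ⟨y, hy, z, hz, rfl⟩ := Finset.mem_add.1 (h ▸ ht)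
    have hz1 : z.1 = 1 := by simpa [hAf y hy] using ht1
    have h1 := huniq (a + z) ⟨h ▸ Finset.add_mem_add ha hz, by simp [hAf a ha, hz1]⟩
    have h2 := huniq (0 + z) ⟨h ▸ Finset.add_mem_add hA hz, by simp [hz1]⟩
    exact add_right_cancel (h1.trans h2.symm)
  refine ⟨h0, ?_, fun A B hA hB h => ?_⟩
  · rintro rfl
    simp_all
  · exact (isFlat_or_isFlat hX h).imp (key A B hA h) (key B A hB (add_comm A B ▸ h))

lemma exists_card_eq_two : ∃ l : Multiset (Finset (ℕ × (Fin m → ℕ))),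
    l.card = 2 ∧ (∀ U ∈ l, IsSetAtom U) ∧ l.sum = tower 1 := by
  set T : Finset (ℕ × (Fin m → ℕ)) := {0} ∪ {1} ×ˢ Finset.Iic 1 with hT
  set T' : Finset (ℕ × (Fin m → ℕ)) := {0} ×ˢ Finset.Iic 1 ∪ {(1, 1)} with hT'
  have memT : ∀ k v, (k, v) ∈ T ↔ k = 0 ∧ v = 0 ∨ k = 1 ∧ v ≤ 1 := by
    intro k v
    simp only [hT, Finset.mem_union, Finset.mem_product, Finset.mem_singleton, Finset.mem_Iic,
      Prod.mk_eq_zero]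
  have memT' : ∀ k v, (k, v) ∈ T' ↔ k = 0 ∧ v ≤ 1 ∨ k = 1 ∧ v = 1 := by
    intro k v
    simp only [hT', Finset.mem_union, Finset.mem_product, Finset.mem_singleton, Finset.mem_Iic,
      Prod.mk.injEq]
  refine ⟨{T, T'}, by simp, ?_, ?_⟩
  · simp only [Multiset.insert_eq_cons, Multiset.mem_cons, Multiset.mem_singleton]
    rintro U (rfl | rfl)
    · refine isSetAtom_of_lowPart_eq_zero ?_ ?_ ?_
      · rintro ⟨k, v⟩ h
        rw [memT] at h
        simp only
        omega
      · ext ⟨k, v⟩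
        simp only [mem_lowPart, memT, Finset.mem_singleton, Prod.ext_iff, Prod.fst_zero,
          Prod.snd_zero]
        grind
      · intro h
        have : (1, 0) ∈ T := (memT _ _).2 (.inr ⟨rfl, zero_le⟩)
        simp [h, Prod.ext_iff] at this
    · refine isSetAtom_of_existsUnique ((memT' _ _).2 (.inl ⟨rfl, zero_le⟩)) ?_ ?_
      · rintro ⟨k, v⟩ h
        rw [memT'] at h
        simp only
        omega
      · refine ⟨(1, 1), ⟨(memT' _ _).2 (.inr ⟨rfl, rfl⟩), rfl⟩, ?_⟩
        rintro ⟨k, v⟩ ⟨h, hk⟩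
        rw [memT'] at h
        grind
  · simp only [Multiset.insert_eq_cons, Multiset.sum_cons, Multiset.sum_singleton]
    have hsplit : ∀ v : Fin m → ℕ, v ≤ 1 + 1 → ∃ a b : Fin m → ℕ, a ≤ 1 ∧ b ≤ 1 ∧ a + b = v :=
      fun v hv => ⟨v ⊓ 1, v - v ⊓ 1, inf_le_right, fun i => by
        have := hv i
        simp at this ⊢
        omega, add_tsub_cancel_of_le inf_le_left⟩
    ext ⟨k, v⟩
    simp only [mem_add_iff, mem_tower, memT, memT']
    constructor
    · rintro ⟨i, a, j, b, ⟨rfl, rfl⟩ | ⟨rfl, ha⟩, ⟨rfl, hb⟩ | ⟨rfl, rfl⟩, rfl, rfl⟩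
      · exact .inl ⟨rfl, by simpa using hb⟩
      · exact .inr (.inl ⟨rfl, by simp⟩)
      · exact .inr (.inl ⟨rfl, add_le_add ha hb⟩)
      · exact .inr (.inr ⟨rfl, by simp, by gcongr⟩)
    · rintro (⟨rfl, h⟩ | ⟨rfl, h⟩ | ⟨rfl, h', h⟩)
      · exact ⟨0, 0, 0, v, .inl ⟨rfl, rfl⟩, .inl ⟨rfl, h⟩, rfl, by simp⟩
      · obtain ⟨a, b, ha, hb, hab⟩ := hsplit v h
        exact ⟨1, a, 0, b, .inr ⟨rfl, ha⟩, .inl ⟨rfl, hb⟩, rfl, hab⟩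
      · exact ⟨1, v - 1, 1, 1, .inr ⟨rfl, tsub_le_iff_right.2 h⟩, .inr ⟨rfl, rfl⟩, rfl,
          tsub_add_cancel_of_le h'⟩

/-- Reading coordinates as digits in base `5`. -/
def digitHom (m : ℕ) : ℕ × (Fin m → ℕ) →+ ℕ where
  toFun x := x.1 + 5 * ∑ i, x.2 i * 5 ^ (i : ℕ)
  map_zero' := by simp
  map_add' x y := by simp [add_mul, Finset.sum_add_distrib]; ring

lemma injOn_digitHom :
    Set.InjOn (digitHom m) {x : ℕ × (Fin m → ℕ) | x.1 < 5 ∧ ∀ i, x.2 i < 5} := by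
  rintro ⟨k, v⟩ ⟨hk, hv⟩ ⟨k', v'⟩ ⟨hk', hv'⟩ h
  change k + 5 * ∑ i, v i * 5 ^ (i : ℕ) = k' + 5 * ∑ i, v' i * 5 ^ (i : ℕ) at h
  simp only at hk hk' hv hv'
  obtain ⟨rfl, hs⟩ : k = k' ∧ ∑ i, v i * 5 ^ (i : ℕ) = ∑ i, v' i * 5 ^ (i : ℕ) := by omega
  have : (fun i => (⟨v i, hv i⟩ : Fin 5)) = fun i => ⟨v' i, hv' i⟩ := by
    apply finFunctionFinEquiv.injective
    ext
    simpa [finFunctionFinEquiv_apply] using hs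
  congr 1
  ext i
  simpa using congrFun this i

lemma injOn_digitHom_tower :
    Set.InjOn (digitHom m) (tower (1 : Fin m → ℕ) + tower 1 : Finset _) := by
  have hle : ∀ x ∈ tower (1 : Fin m → ℕ), x.1 ≤ 2 ∧ ∀ i, x.2 i ≤ 2 := by
    rintro ⟨k, v⟩ hv
    rcases mem_tower.1 hv with ⟨rfl, h⟩ | ⟨rfl, h⟩ | ⟨rfl, -, h⟩
    · exact ⟨by simp, fun i => (h i).trans (by simp)⟩
    · exact ⟨by simp, fun i => h i⟩
    · exact ⟨by simp, fun i => h i⟩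
  refine injOn_digitHom.mono fun x hx => ?_
  obtain ⟨y, hy, z, hz, rfl⟩ := Finset.mem_add.1 (Finset.mem_coe.1 hx)
  have h1 := hle y hy
  have h2 := hle z hz
  refine ⟨?_, fun i => ?_⟩
  · simp only [Prod.fst_add]
    omega
  · have := h1.2 i
    have := h2.2 i
    simp only [Prod.snd_add, Pi.add_apply]
    omega

end Model

theorem exists_relCancel_lengthSet_two_n (n : ℕ) (hn : 3 ≤ n) :
    ∃ S : Finset ℕ, 0 ∈ S ∧ RelCancel S ∧ LengthSet S = {2, n} := by
  obtain ⟨m, rfl⟩ : ∃ m, n = m + 1 := ⟨n - 1, by omega⟩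
  have hm : 2 ≤ m := by omega
  have h0 := zero_mem_tower (1 : Fin m → ℕ)
  refine ⟨(tower (1 : Fin m → ℕ)).image (digitHom m),
    Finset.mem_image.2 ⟨0, h0, map_zero _⟩,
    relCancel_image h0 injOn_digitHom_tower fun B C hB _ h => mem_of_add_subset_tower hB h, ?_⟩
  rw [lengthSet_image h0 injOn_digitHom_tower]
  ext k
  constructor
  · rintro ⟨l, rfl, hl, h⟩
    exact card_of_sum_eq_tower hm hl h
  · rintro (rfl | rfl)
    · exact exists_card_eq_two
    · exact exists_card_eq_succ hm
end

section
/- For every rational number q ≥ 1, there exists A ∈ P_{fin,0}(ℕ₀) with nonempty length set such that max(L(A))/min(L(A)) = q; that is, P_{fin,0}(ℕ₀) is fully elastic. -/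
open Pointwise

/-- Every decomposition `A = X + Y` with `0 ∈ X, Y` has a connected bipartite graph of unique
sums. -/
def IsRigid {M : Type*} [AddCommMonoid M] [DecidableEq M] (A : Finset M) : Prop :=
  0 ∈ A ∧ ∀ X Y : Finset M, 0 ∈ X → 0 ∈ Y → X + Y = A → ∀ P Q : M → Prop,
    (∀ x ∈ X, ∀ y ∈ Y, UniqueAdd X Y x y → (P x ↔ Q y)) → P 0 →
      (∀ x ∈ X, P x) ∧ ∀ y ∈ Y, Q y

theorem uniqueAdd_zero (X Y : Finset ℕ) : UniqueAdd X Y 0 0 := by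
  intro a b _ _ h
  omega

theorem subset_add_of_zero_mem {M : Type*} [AddCommMonoid M] [DecidableEq M] {X Y : Finset M}
    (hY : 0 ∈ Y) : X ⊆ X + Y :=
  fun x hx => Finset.mem_add.2 ⟨x, hx, 0, hY, add_zero x⟩

theorem zero_mem_add {M : Type*} [AddCommMonoid M] [DecidableEq M] {X Y : Finset M}
    (hX : 0 ∈ X) (hY : 0 ∈ Y) : 0 ∈ X + Y :=
  subset_add_of_zero_mem hY hX

/-- The encoding of pairs `(a, b)` as `a + N * b`, injective on pairs with `a < N`. -/
def enc (N : ℕ) : ℕ × ℕ →+ ℕ where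
  toFun p := p.1 + N * p.2
  map_zero' := rfl
  map_add' p q := by simp only [Prod.fst_add, Prod.snd_add]; ring

theorem enc_apply (N : ℕ) (p : ℕ × ℕ) : enc N p = p.1 + N * p.2 := rfl

theorem enc_inj {N : ℕ} {p q : ℕ × ℕ} (hp : p.1 < N) (hq : q.1 < N) (h : enc N p = enc N q) :
    p = q := by
  rw [enc_apply, enc_apply] at h
  have h1 := congrArg (· % N) h
  have h2 := congrArg (· / N) h
  have hN : 0 < N := by omega
  simp only [Nat.add_mul_mod_self_left, Nat.mod_eq_of_lt hp, Nat.mod_eq_of_lt hq] at h1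
  simp only [Nat.add_mul_div_left _ _ hN, Nat.div_eq_of_lt hp, Nat.div_eq_of_lt hq, zero_add] at h2
  exact Prod.ext h1 h2

theorem zero_mem_image_enc {N : ℕ} {S : Finset (ℕ × ℕ)} (h : 0 ∈ S) : 0 ∈ S.image (enc N) :=
  Finset.mem_image.2 ⟨0, h, map_zero _⟩

theorem image_enc_inj {N : ℕ} {S S' : Finset (ℕ × ℕ)} (hS : ∀ p ∈ S, p.1 < N)
    (hS' : ∀ p ∈ S', p.1 < N) (h : S.image (enc N) = S'.image (enc N)) : S = S' := by
  have key : ∀ S S' : Finset (ℕ × ℕ), (∀ p ∈ S, p.1 < N) → (∀ p ∈ S', p.1 < N) →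
      S.image (enc N) = S'.image (enc N) → S ⊆ S' := by
    intro S S' hS hS' h p hp
    obtain ⟨q, hq, e⟩ := Finset.mem_image.1 (h ▸ Finset.mem_image_of_mem (enc N) hp)
    rwa [← enc_inj (hS' q hq) (hS p hp) e]
  exact (key S S' hS hS' h).antisymm (key S' S hS' hS h.symm)

theorem exists_lift_of_add_eq_image {N : ℕ} {S : Finset (ℕ × ℕ)} (hS : ∀ p ∈ S, 2 * p.1 < N)
    {X Y : Finset ℕ} (hX : 0 ∈ X) (hY : 0 ∈ Y) (h : X + Y = S.image (enc N)) :
    ∃ X' Y' : Finset (ℕ × ℕ), 0 ∈ X' ∧ 0 ∈ Y' ∧ X'.image (enc N) = X ∧ Y'.image (enc N) = Y ∧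
      X' + Y' = S := by
  have lift : ∀ Z : Finset ℕ, Z ⊆ S.image (enc N) → 0 ∈ Z →
      ∃ Z' ⊆ S, 0 ∈ Z' ∧ Z'.image (enc N) = Z := by
    intro Z hZ h0
    obtain ⟨Z', hZS, rfl⟩ := Finset.subset_image_iff.1 hZ
    refine ⟨Z', hZS, ?_, rfl⟩
    obtain ⟨p, hp, e⟩ := Finset.mem_image.1 h0
    have hp' := hS p (hZS hp)
    have h0' : (0 : ℕ × ℕ).1 < N := by rw [Prod.fst_zero]; omega
    exact enc_inj (by omega) h0' (e.trans (map_zero _).symm) ▸ hp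
  obtain ⟨X', hXS, hX0, rfl⟩ := lift X (h ▸ subset_add_of_zero_mem hY) hX
  obtain ⟨Y', hYS, hY0, rfl⟩ := lift Y (h ▸ add_comm Y _ ▸ subset_add_of_zero_mem hX) hY
  refine ⟨X', Y', hX0, hY0, rfl, rfl, image_enc_inj (N := N) ?_ ?_ ?_⟩
  · intro p hp
    obtain ⟨x, hx, y, hy, rfl⟩ := Finset.mem_add.1 hp
    have := hS x (hXS hx)
    have := hS y (hYS hy)
    rw [Prod.fst_add]
    omega
  · intro p hp
    have := hS p hp
    omega
  · rw [Finset.image_add, h]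

theorem IsRigid.image_enc {N : ℕ} {S : Finset (ℕ × ℕ)} (hS : ∀ p ∈ S, 2 * p.1 < N)
    (h : IsRigid S) : IsRigid (S.image (enc N)) := by
  refine ⟨zero_mem_image_enc h.1, fun X Y hX hY e P Q hPQ hP => ?_⟩
  obtain ⟨X', Y', hX', hY', rfl, rfl, e'⟩ := exists_lift_of_add_eq_image hS hX hY e
  have := h.2 X' Y' hX' hY' e' (fun x => P (enc N x)) (fun y => Q (enc N y)) ?_
    (by rwa [map_zero])
  · simpa only [Finset.forall_mem_image] using this
  · intro x hx y hy hu
    refine hPQ _ (Finset.mem_image_of_mem _ hx) _ (Finset.mem_image_of_mem _ hy) ?_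
    intro a b ha hb hab
    obtain ⟨a, ha', rfl⟩ := Finset.mem_image.1 ha
    obtain ⟨b, hb', rfl⟩ := Finset.mem_image.1 hb
    rw [← map_add, ← map_add] at hab
    have h1 := hS _ (e' ▸ Finset.add_mem_add ha' hb')
    have h2 := hS _ (e' ▸ Finset.add_mem_add hx hy)
    obtain ⟨rfl, rfl⟩ := hu ha' hb' (enc_inj (by omega) (by omega) hab)
    exact ⟨rfl, rfl⟩

theorem IsRigid.left_of_add {X Z : Finset ℕ} (hX : 0 ∈ X) (hZ : 0 ∈ Z) (h : IsRigid (X + Z)) :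
    IsRigid X := by
  refine ⟨hX, ?_⟩
  rintro X₁ X₂ h₁ h₂ rfl P Q hPQ hP
  have key := h.2 X₁ (X₂ + Z) h₁ (zero_mem_add h₂ hZ) (add_assoc _ _ _).symm P
    (fun w => ∀ x ∈ X₂, ∀ z ∈ Z, x + z = w → Q x) ?_ hP
  · exact ⟨key.1, fun y hy => key.2 y (subset_add_of_zero_mem hZ hy) y hy 0 hZ (add_zero y)⟩
  · intro x hx w hw hu
    have key : ∀ y ∈ X₂, ∀ z ∈ Z, y + z = w → (P x ↔ Q y) := by
      rintro y hy z hz rfl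
      refine hPQ x hx y hy fun a b ha hb hab => ?_
      have := hu ha (Finset.add_mem_add hb hz) (by omega)
      omega
    obtain ⟨y, hy, z, hz, rfl⟩ := Finset.mem_add.1 hw
    exact ⟨fun hp y' hy' z' hz' e => (key y' hy' z' hz' e).1 hp,
      fun hq => (key y hy z hz rfl).2 (hq y hy z hz rfl)⟩

theorem IsRigid.right_of_add {X Z : Finset ℕ} (hX : 0 ∈ X) (hZ : 0 ∈ Z) (h : IsRigid (X + Z)) :
    IsRigid Z :=
  IsRigid.left_of_add hZ hX (add_comm X Z ▸ h)

theorem IsRigid.relCancel {A : Finset ℕ} (h : IsRigid A) : RelCancel A := by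
  have key : ∀ B C D : Finset ℕ, 0 ∈ B → 0 ∈ C → 0 ∈ D → A = B + C → A = B + D → D ⊆ C := by
    intro B C D hB hC hD hBC hBD
    have e : B + (C ∪ D) = A := by rw [Finset.add_union, ← hBC, ← hBD, Finset.union_self]
    have := (h.2 B (C ∪ D) hB (Finset.mem_union_left _ hC) e (fun _ => True) (fun y => y ∈ C) ?_
      trivial).2
    · exact fun d hd => this d (Finset.mem_union_right _ hd)
    · intro x hx y hy hu
      refine ⟨fun _ => ?_, fun _ => trivial⟩
      obtain ⟨b, hb, c, hc, e'⟩ := Finset.mem_add.1 (hBC ▸ e ▸ Finset.add_mem_add hx hy)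
      exact (hu hb (Finset.mem_union_left _ hc) e').2 ▸ hc
  intro B C D hB hC hD hBC hBD
  exact (key B D C hB hD hC hBD hBC).antisymm (key B C D hB hC hD hBC hBD)

/-- The fibre of `S` over the first coordinate `t`. -/
def fiber (S : Finset (ℕ × ℕ)) (t : ℕ) : Finset ℕ :=
  (S.filter fun p => p.1 = t).image Prod.snd

theorem mem_fiber {S : Finset (ℕ × ℕ)} {t x : ℕ} : x ∈ fiber S t ↔ (t, x) ∈ S := by
  simp only [fiber, Finset.mem_image, Finset.mem_filter]
  constructor
  · rintro ⟨⟨a, b⟩, ⟨h, rfl⟩, rfl⟩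
    exact h
  · exact fun h => ⟨(t, x), ⟨h, rfl⟩, rfl⟩

theorem image_fst_add {X Y : Finset (ℕ × ℕ)} :
    (X + Y).image Prod.fst = X.image Prod.fst + Y.image Prod.fst :=
  Finset.image_add (AddMonoidHom.fst ℕ ℕ)

theorem fiber_add_of_uniqueAdd {X Y : Finset (ℕ × ℕ)} {s u : ℕ}
    (h : UniqueAdd (X.image Prod.fst) (Y.image Prod.fst) s u) :
    fiber X s + fiber Y u = fiber (X + Y) (s + u) := by
  ext z
  simp only [Finset.mem_add, mem_fiber]
  constructor
  · rintro ⟨x, hx, y, hy, rfl⟩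
    exact ⟨_, hx, _, hy, rfl⟩
  · rintro ⟨⟨a, x⟩, hx, ⟨b, y⟩, hy, e⟩
    obtain ⟨e1, rfl⟩ := Prod.ext_iff.1 e
    obtain ⟨rfl, rfl⟩ := h (Finset.mem_image_of_mem _ hx) (Finset.mem_image_of_mem _ hy) e1
    exact ⟨x, hx, y, hy, rfl⟩

theorem zero_mem_image_fst {X : Finset (ℕ × ℕ)} (h : 0 ∈ X) : 0 ∈ X.image Prod.fst :=
  Finset.mem_image.2 ⟨0, h, rfl⟩

theorem IsRigid.of_fiber {S : Finset (ℕ × ℕ)} (hB : IsRigid (S.image Prod.fst))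
    (hS : ∀ t ∈ S.image Prod.fst, IsRigid (fiber S t)) : IsRigid S := by
  refine ⟨mem_fiber.1 (hS 0 hB.1).1, ?_⟩
  rintro X Y hX hY rfl P Q hPQ hP
  rw [image_fst_add] at hB hS
  have key := hB.2 _ _ (zero_mem_image_fst hX) (zero_mem_image_fst hY) rfl
    (fun s => ∀ x ∈ fiber X s, P (s, x)) (fun u => ∀ y ∈ fiber Y u, Q (u, y)) ?_ ?_
  · exact ⟨fun x hx => key.1 x.1 (Finset.mem_image_of_mem _ hx) x.2 (mem_fiber.2 hx),
      fun y hy => key.2 y.1 (Finset.mem_image_of_mem _ hy) y.2 (mem_fiber.2 hy)⟩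
  · intro s hs u hu hsu
    have hr := hS _ (Finset.add_mem_add hs hu)
    have e := fiber_add_of_uniqueAdd hsu
    rw [← e] at hr
    obtain ⟨x, hx, y, hy, exy⟩ := Finset.mem_add.1 hr.1
    obtain ⟨rfl, rfl⟩ : x = 0 ∧ y = 0 := by omega
    have edge : ∀ x ∈ fiber X s, ∀ y ∈ fiber Y u, UniqueAdd (fiber X s) (fiber Y u) x y →
        (P (s, x) ↔ Q (u, y)) := by
      intro x hx y hy hxy
      refine hPQ _ (mem_fiber.1 hx) _ (mem_fiber.1 hy) ?_
      rintro ⟨a, a'⟩ ⟨b, b'⟩ ha hb hab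
      obtain ⟨e1, e2⟩ := Prod.ext_iff.1 hab
      obtain ⟨rfl, rfl⟩ := hsu (Finset.mem_image_of_mem _ ha) (Finset.mem_image_of_mem _ hb) e1
      obtain ⟨rfl, rfl⟩ := hxy (mem_fiber.2 ha) (mem_fiber.2 hb) e2
      exact ⟨rfl, rfl⟩
    have all := hr.2 _ _ hx hy rfl (fun x => P (s, x)) (fun y => Q (u, y)) edge
    have edge0 := edge 0 hx 0 hy (uniqueAdd_zero _ _)
    exact ⟨fun h => (all (h 0 hx)).2, fun h => (all (edge0.2 (h 0 hy))).1⟩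
  · have hu := uniqueAdd_zero (X.image Prod.fst) (Y.image Prod.fst)
    have e := fiber_add_of_uniqueAdd hu
    have hr := hS _ (zero_mem_add (zero_mem_image_fst hX) (zero_mem_image_fst hY))
    refine (hr.2 _ _ (mem_fiber.2 hX) (mem_fiber.2 hY) e (fun x => P (0, x))
      (fun y => Q (0, y)) ?_ hP).1
    intro x hx y hy hxy
    refine hPQ _ (mem_fiber.1 hx) _ (mem_fiber.1 hy) ?_
    rintro ⟨a, a'⟩ ⟨b, b'⟩ ha hb hab
    obtain ⟨e1, e2⟩ := Prod.ext_iff.1 hab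
    obtain ⟨rfl, rfl⟩ := hu (Finset.mem_image_of_mem _ ha) (Finset.mem_image_of_mem _ hb) e1
    obtain ⟨rfl, rfl⟩ := hxy (mem_fiber.2 ha) (mem_fiber.2 hb) e2
    exact ⟨rfl, rfl⟩

/-- The product of `A` and `B` placed in base `N`. -/
def pack (N : ℕ) (A B : Finset ℕ) : Finset ℕ := (A ×ˢ B).image (enc N)

theorem pack_add_pack (N : ℕ) (A B C D : Finset ℕ) :
    pack N A B + pack N C D = pack N (A + C) (B + D) := by
  rw [pack, pack, pack, ← Finset.product_add_product_comm, Finset.image_add]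

theorem zero_mem_pack {N : ℕ} {A B : Finset ℕ} (hA : 0 ∈ A) (hB : 0 ∈ B) : 0 ∈ pack N A B :=
  zero_mem_image_enc (Finset.mk_mem_product hA hB)

theorem pack_zero_right (N : ℕ) (A : Finset ℕ) : pack N A {0} = A := by
  ext a
  simp [pack, enc_apply]

theorem pack_zero_zero (N : ℕ) : pack N {0} {0} = {0} := pack_zero_right N {0}

theorem pack_inj {N : ℕ} {A B C D : Finset ℕ} (hA : ∀ a ∈ A, a < N) (hC : ∀ c ∈ C, c < N)
    (hA0 : 0 ∈ A) (hB0 : 0 ∈ B) (h : pack N A B = pack N C D) : A = C ∧ B = D := by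
  have e := image_enc_inj (fun p hp => hA _ (Finset.mem_product.1 hp).1)
    (fun p hp => hC _ (Finset.mem_product.1 hp).1) h
  have h0 : ((0, 0) : ℕ × ℕ) ∈ C ×ˢ D := e ▸ Finset.mk_mem_product hA0 hB0
  rw [Finset.mem_product] at h0
  constructor
  · ext a
    have := congrArg ((a, 0) ∈ ·) e
    simpa [hB0, h0.2] using this
  · ext b
    have := congrArg ((0, b) ∈ ·) e
    simpa [hA0, h0.1] using this

theorem fiber_product {A B : Finset ℕ} {t : ℕ} (ht : t ∈ A) : fiber (A ×ˢ B) t = B := by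
  ext b
  simp [mem_fiber, ht]

theorem IsRigid.pack {N : ℕ} {A B : Finset ℕ} (hN : ∀ a ∈ A, 2 * a < N) (hA : IsRigid A)
    (hB : IsRigid B) : IsRigid (pack N A B) := by
  refine IsRigid.image_enc (fun p hp => hN _ (Finset.mem_product.1 hp).1) (IsRigid.of_fiber ?_ ?_)
  · rwa [Finset.product_image_fst ⟨0, hB.1⟩]
  · intro t ht
    rw [Finset.product_image_fst ⟨0, hB.1⟩] at ht
    rwa [fiber_product ht]

theorem IsRigid.exists_pack_of_add_eq_pack {N : ℕ} {A B X Y : Finset ℕ}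
    (hN : ∀ a ∈ A, 2 * a < N) (hA : IsRigid A) (hB : IsRigid B) (hX : 0 ∈ X) (hY : 0 ∈ Y)
    (h : X + Y = _root_.pack N A B) : ∃ X₁ X₂ Y₁ Y₂ : Finset ℕ, 0 ∈ X₁ ∧ 0 ∈ X₂ ∧ 0 ∈ Y₁ ∧ 0 ∈ Y₂ ∧
      X = _root_.pack N X₁ X₂ ∧ Y = _root_.pack N Y₁ Y₂ ∧ X₁ + Y₁ = A ∧ X₂ + Y₂ = B := by
  obtain ⟨X', Y', hX', hY', rfl, rfl, e⟩ :=
    exists_lift_of_add_eq_image (fun p hp => hN _ (Finset.mem_product.1 hp).1) hX hY h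
  have e1 : X'.image Prod.fst + Y'.image Prod.fst = A := by
    rw [← image_fst_add, e, Finset.product_image_fst ⟨0, hB.1⟩]
  have h0X := zero_mem_image_fst hX'
  have h0Y := zero_mem_image_fst hY'
  have edge : ∀ s ∈ X'.image Prod.fst, ∀ u ∈ Y'.image Prod.fst,
      UniqueAdd (X'.image Prod.fst) (Y'.image Prod.fst) s u → fiber X' s + fiber Y' u = B := by
    intro s hs u hu hsu
    rw [fiber_add_of_uniqueAdd hsu, e, fiber_product (e1 ▸ Finset.add_mem_add hs hu)]
  have e0 := edge 0 h0X 0 h0Y (uniqueAdd_zero _ _)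
  have key := hA.2 _ _ h0X h0Y e1 (fun s => fiber X' s = fiber X' 0)
    (fun u => fiber Y' u = fiber Y' 0) ?_ rfl
  · refine ⟨_, fiber X' 0, _, fiber Y' 0, h0X, mem_fiber.2 hX', h0Y, mem_fiber.2 hY', ?_, ?_,
      e1, e0⟩
    · refine congrArg (Finset.image (enc N)) (Finset.ext fun p => ?_)
      rw [Finset.mem_product]
      refine ⟨fun hp => ?_, fun ⟨h1, h2⟩ => ?_⟩
      · have := Finset.mem_image_of_mem Prod.fst hp
        exact ⟨this, key.1 _ this ▸ mem_fiber.2 hp⟩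
      · rw [← key.1 _ h1] at h2
        exact mem_fiber.1 h2
    · refine congrArg (Finset.image (enc N)) (Finset.ext fun p => ?_)
      rw [Finset.mem_product]
      refine ⟨fun hp => ?_, fun ⟨h1, h2⟩ => ?_⟩
      · have := Finset.mem_image_of_mem Prod.fst hp
        exact ⟨this, key.2 _ this ▸ mem_fiber.2 hp⟩
      · rw [← key.2 _ h1] at h2
        exact mem_fiber.1 h2
  · intro s hs u hu hsu
    have e2 := edge s hs u hu hsu
    have h3 : 0 ∈ fiber X' s ∧ 0 ∈ fiber Y' u := by
      obtain ⟨x, hx, y, hy, exy⟩ := Finset.mem_add.1 (e2 ▸ hB.1)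
      obtain ⟨rfl, rfl⟩ : x = 0 ∧ y = 0 := by omega
      exact ⟨hx, hy⟩
    constructor
    · intro h
      rw [h] at e2
      exact hB.relCancel _ _ _ (mem_fiber.2 hX') h3.2 (mem_fiber.2 hY') e2.symm e0.symm
    · intro h
      rw [h, add_comm] at e2
      rw [add_comm] at e0
      exact hB.relCancel _ _ _ (mem_fiber.2 hY') h3.1 (mem_fiber.2 hX') e2.symm e0.symm

/-- The largest set `Y ⊆ A` with `X + Y ⊆ A`. -/
def maxCofactor (A X : Finset ℕ) : Finset ℕ := A.filter fun y => ∀ x ∈ X, x + y ∈ A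

theorem subset_maxCofactor {X Y : Finset ℕ} (hX : 0 ∈ X) : Y ⊆ maxCofactor (X + Y) X :=
  fun _ hy => Finset.mem_filter.2 ⟨add_comm Y X ▸ subset_add_of_zero_mem hX hy,
    fun _ hx => Finset.add_mem_add hx hy⟩

theorem add_maxCofactor {X Y : Finset ℕ} (hX : 0 ∈ X) : X + maxCofactor (X + Y) X = X + Y := by
  refine Finset.Subset.antisymm (fun z hz => ?_)
    (Finset.add_subset_add_left (subset_maxCofactor hX))
  obtain ⟨x, hx, y, hy, rfl⟩ := Finset.mem_add.1 hz
  exact (Finset.mem_filter.1 hy).2 x hx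

/-- The elements of `Y` joined by a unique sum in `X + Y` to some element of `S`. -/
def neighbors (X Y S : Finset ℕ) : Finset ℕ :=
  Y.filter fun y => ∃ x ∈ S, ∀ a ∈ X, ∀ b ∈ Y, a + b = x + y → a = x ∧ b = y

/-- The elements of `X` reached from `S` by two unique sums in `X + Y`. -/
def neighborsTwice (X Y S : Finset ℕ) : Finset ℕ := neighbors Y X (neighbors X Y S)

theorem isRigid_of_neighbors {A : Finset ℕ} (h0 : 0 ∈ A)
    (h : ∀ X ∈ A.powerset, 0 ∈ X → X + maxCofactor A X = A →
      neighborsTwice X (maxCofactor A X) (neighborsTwice X (maxCofactor A X)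
        (neighborsTwice X (maxCofactor A X) {0})) = X ∧
      neighbors X (maxCofactor A X) X = maxCofactor A X) : IsRigid A := by
  refine ⟨h0, fun X Y hX hY e P Q hPQ hP => ?_⟩
  have hXA : X ⊆ A := e ▸ subset_add_of_zero_mem hY
  have hYm : Y ⊆ maxCofactor A X := e ▸ subset_maxCofactor hX
  have em : X + maxCofactor A X = A := e ▸ add_maxCofactor hX
  obtain ⟨h1, h2⟩ := h X (Finset.mem_powerset.2 hXA) hX em
  have eY : maxCofactor A X = Y := by
    refine Finset.Subset.antisymm (fun y hy => ?_) hYm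
    obtain ⟨x, hx, hu⟩ := (Finset.mem_filter.1 (h2.symm ▸ hy)).2
    obtain ⟨a, ha, b, hb, hab⟩ := Finset.mem_add.1 (e.symm ▸ em ▸ Finset.add_mem_add hx hy)
    exact (hu a ha b (hYm hb) hab).2 ▸ hb
  rw [eY] at h1 h2
  have hN : ∀ S ⊆ X, (∀ x ∈ S, P x) → ∀ y ∈ neighbors X Y S, Q y := by
    intro S hSX hS y hy
    obtain ⟨hyY, x, hx, hu⟩ := Finset.mem_filter.1 hy
    exact (hPQ x (hSX hx) y hyY fun a b ha hb => hu a ha b hb).1 (hS x hx)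
  have hT : ∀ S ⊆ X, (∀ x ∈ S, P x) → ∀ x ∈ neighborsTwice X Y S, P x := by
    intro S hSX hS x hx
    obtain ⟨hxX, y, hy, hu⟩ := Finset.mem_filter.1 hx
    refine (hPQ x hxX y (Finset.mem_filter.1 hy).1 fun a b ha hb hab => ?_).2 (hN S hSX hS y hy)
    exact (hu b hb a ha (by omega)).symm
  have hsub : ∀ S, neighborsTwice X Y S ⊆ X := fun S => Finset.filter_subset _ _
  have hPX : ∀ x ∈ X, P x := by
    rw [← h1]
    refine hT _ (hsub _) (hT _ (hsub _) (hT _ (by simpa using hX) (by simpa using hP)))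
  exact ⟨hPX, h2 ▸ hN X subset_rfl hPX⟩

theorem isRigid_zero : IsRigid ({0} : Finset ℕ) :=
  isRigid_of_neighbors (by decide) (by decide +kernel)

theorem relPrime_of_powerset {C D : Finset ℕ}
    (h : ∀ X ∈ C.powerset, 0 ∈ X → X + maxCofactor C X = C → X + maxCofactor D X = D → X = {0}) :
    RelPrime C D := by
  rintro X hX ⟨Y, hY, e⟩ ⟨Z, -, e'⟩
  exact h X (Finset.mem_powerset.2 (e ▸ subset_add_of_zero_mem hY)) hX
    (e ▸ add_maxCofactor hX) (e' ▸ add_maxCofactor hX)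

theorem isAtomP_pair : IsAtomP {0, 1} := by
  refine ⟨by decide, by decide, fun A B hA hB e => ?_⟩
  have hA' : A ∈ ({0, 1} : Finset ℕ).powerset :=
    Finset.mem_powerset.2 (e ▸ subset_add_of_zero_mem hB)
  have hB' : B ∈ ({0, 1} : Finset ℕ).powerset :=
    Finset.mem_powerset.2 (e ▸ add_comm B A ▸ subset_add_of_zero_mem hA)
  have key : ∀ A ∈ ({0, 1} : Finset ℕ).powerset, ∀ B ∈ ({0, 1} : Finset ℕ).powerset,
      0 ∈ A → 0 ∈ B → {0, 1} = A + B → A = {0} ∨ B = {0} := by decide +kernel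
  exact key A hA' B hB' hA hB e

theorem IsAtomP.pack_zero {A : Finset ℕ} (h : IsAtomP A) {N : ℕ} (hN : 0 < N) (hA : IsRigid A) :
    IsAtomP (pack N {0} A) := by
  refine ⟨zero_mem_pack (Finset.mem_singleton_self 0) h.1, fun e => h.2.1 ?_, ?_⟩
  · rw [← pack_zero_zero N] at e
    exact (pack_inj (by simpa) (by simpa) (Finset.mem_singleton_self 0) h.1 e).2
  · intro X Y hX hY e
    obtain ⟨X₁, X₂, Y₁, Y₂, hX₁, hX₂, hY₁, hY₂, rfl, rfl, e1, rfl⟩ :=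
      IsRigid.exists_pack_of_add_eq_pack (by simpa) isRigid_zero hA hX hY e.symm
    have hX₁ : X₁ = {0} := (Finset.subset_singleton_iff.1
      (e1 ▸ subset_add_of_zero_mem hY₁)).resolve_left (Finset.ne_empty_of_mem hX₁)
    have hY₁ : Y₁ = {0} := (Finset.subset_singleton_iff.1 (e1 ▸ add_comm X₁ Y₁ ▸
      subset_add_of_zero_mem (hX₁ ▸ Finset.mem_singleton_self 0))).resolve_left
        (Finset.ne_empty_of_mem hY₁)
    subst hX₁ hY₁
    rcases h.2.2 X₂ Y₂ hX₂ hY₂ rfl with rfl | rfl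
    · exact Or.inl (pack_zero_zero N)
    · exact Or.inr (pack_zero_zero N)

theorem zero_mem_sum {l : Multiset (Finset ℕ)} (h : ∀ U ∈ l, IsAtomP U) : 0 ∈ l.sum := by
  induction l using Multiset.induction_on with
  | empty => rw [Multiset.sum_zero]; exact Finset.mem_singleton_self 0
  | cons U l ih =>
    rw [Multiset.sum_cons]
    exact zero_mem_add (h U (Multiset.mem_cons_self U l)).1
      (ih fun V hV => h V (Multiset.mem_cons_of_mem hV))

theorem zero_mem_lengthSet : 0 ∈ LengthSet {0} :=
  ⟨0, rfl, by simp, rfl⟩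

theorem one_mem_lengthSet {A : Finset ℕ} (h : IsAtomP A) : 1 ∈ LengthSet A :=
  ⟨{A}, rfl, by simpa using h, by simp⟩

theorem add_mem_lengthSet {A B : Finset ℕ} {j k : ℕ} (hj : j ∈ LengthSet A)
    (hk : k ∈ LengthSet B) : j + k ∈ LengthSet (A + B) := by
  obtain ⟨l, rfl, hl, rfl⟩ := hj
  obtain ⟨m, rfl, hm, rfl⟩ := hk
  exact ⟨l + m, Multiset.card_add _ _,
    fun U hU => (Multiset.mem_add.1 hU).elim (hl U) (hm U), Multiset.sum_add _ _⟩

theorem mem_lengthSet_pack_zero {N : ℕ} (hN : 0 < N) {A : Finset ℕ} (hA : IsRigid A) {k : ℕ}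
    (hk : k ∈ LengthSet A) : k ∈ LengthSet (pack N {0} A) := by
  obtain ⟨l, rfl, hl, rfl⟩ := hk
  induction l using Multiset.induction_on with
  | empty =>
    rw [Multiset.sum_zero, ← Finset.singleton_zero, pack_zero_zero]
    exact zero_mem_lengthSet
  | cons U l ih =>
    rw [Multiset.sum_cons] at hA ⊢
    have hU := hl U (Multiset.mem_cons_self U l)
    have hl' : ∀ V ∈ l, IsAtomP V := fun V hV => hl V (Multiset.mem_cons_of_mem hV)
    have h0 := zero_mem_sum hl'
    have e : pack N {0} (U + l.sum) = pack N {0} l.sum + pack N {0} U := by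
      rw [pack_add_pack, add_comm U, Finset.singleton_add_singleton]
    rw [Multiset.card_cons, e]
    exact add_mem_lengthSet (ih hl' (hA.right_of_add hU.1 h0))
      (one_mem_lengthSet (hU.pack_zero hN (hA.left_of_add hU.1 h0)))

theorem add_mem_lengthSet_pack {N : ℕ} (hN : 0 < N) {A B : Finset ℕ} {j k : ℕ} (hB : IsRigid B)
    (hj : j ∈ LengthSet A) (hk : k ∈ LengthSet B) : j + k ∈ LengthSet (pack N A B) := by
  have e : A + pack N {0} B = pack N A B := by
    conv_lhs => rw [← pack_zero_right N A]
    rw [pack_add_pack, Finset.singleton_zero, add_zero, zero_add]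
  exact e ▸ add_mem_lengthSet hj (mem_lengthSet_pack_zero hN hB hk)

theorem RelPrime.pack {N : ℕ} {A B C D : Finset ℕ} (hAN : ∀ a ∈ A, 2 * a < N)
    (hBN : ∀ b ∈ B, 2 * b < N) (hA : IsRigid A) (hB : IsRigid B) (hC : IsRigid C)
    (hD : IsRigid D) (hAB : RelPrime A B) (hCD : RelPrime C D) :
    RelPrime (pack N A C) (pack N B D) := by
  rintro Z hZ ⟨Z', hZ', e⟩ ⟨Z'', hZ'', e'⟩
  obtain ⟨X₁, X₂, Y₁, Y₂, hX₁, hX₂, hY₁, hY₂, rfl, -, rfl, rfl⟩ :=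
    IsRigid.exists_pack_of_add_eq_pack hAN hA hC hZ hZ' e.symm
  obtain ⟨W₁, W₂, V₁, V₂, hW₁, hW₂, hV₁, hV₂, e2, -, rfl, rfl⟩ :=
    IsRigid.exists_pack_of_add_eq_pack hBN hB hD hZ hZ'' e'.symm
  obtain ⟨rfl, rfl⟩ := pack_inj
    (fun a ha => by have := hAN a (subset_add_of_zero_mem hY₁ ha); omega)
    (fun b hb => by have := hBN b (subset_add_of_zero_mem hV₁ hb); omega) hX₁ hX₂ e2
  rw [hAB X₁ hX₁ ⟨Y₁, hY₁, rfl⟩ ⟨V₁, hV₁, rfl⟩, hCD X₂ hX₂ ⟨Y₂, hY₂, rfl⟩ ⟨V₂, hV₂, rfl⟩,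
    pack_zero_zero]

/-- Two-level data for a long factorization of a sum of two atoms: `s` divides both `T + T'` and
`T + T''`, and `s` has a factorization of length `n`. -/
structure Exchange (n : ℕ) (T T' T'' s r r' : Finset ℕ) : Prop where
  zero_mem_r : 0 ∈ r
  zero_mem_r' : 0 ∈ r'
  zero_mem_T : 0 ∈ T
  zero_mem_T' : 0 ∈ T'
  zero_mem_T'' : 0 ∈ T''
  zero_mem_s : 0 ∈ s
  add_eq : T + T' = s + r
  add_eq' : T + T'' = s + r'
  rigid_T_T' : IsRigid (T + T')
  rigid_s_T' : IsRigid (s + T')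
  rigid_T_T'' : IsRigid (T + T'')
  rigid_s_T'' : IsRigid (s + T'')
  relPrime : RelPrime T s
  relPrime' : RelPrime T' T''
  mem_lengthSet : n ∈ LengthSet s

theorem exchange_zero :
    Exchange 1 {0, 1, 4} {0, 3, 4} {0, 4, 5} {0, 1} {0, 3, 4, 7} {0, 4, 5, 8} where
  zero_mem_r := by decide
  zero_mem_r' := by decide
  zero_mem_T := by decide
  zero_mem_T' := by decide
  zero_mem_T'' := by decide
  zero_mem_s := by decide
  add_eq := by decide
  add_eq' := by decide
  rigid_T_T' := isRigid_of_neighbors (by decide) (by decide +kernel)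
  rigid_s_T' := isRigid_of_neighbors (by decide) (by decide +kernel)
  rigid_T_T'' := isRigid_of_neighbors (by decide) (by decide +kernel)
  rigid_s_T'' := isRigid_of_neighbors (by decide) (by decide +kernel)
  relPrime := relPrime_of_powerset (by decide +kernel)
  relPrime' := relPrime_of_powerset (by decide +kernel)
  mem_lengthSet := one_mem_lengthSet isAtomP_pair

theorem Exchange.pack {N m n : ℕ} {T T' T'' s r r' U U' U'' t q q' : Finset ℕ}
    (h : Exchange m T T' T'' s r r') (hTN : ∀ a ∈ T + T', 2 * a < N)
    (hTN' : ∀ a ∈ T + T'', 2 * a < N) (hsN : ∀ a ∈ s + T', 2 * a < N)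
    (hsN' : ∀ a ∈ s + T'', 2 * a < N) (h' : Exchange n U U' U'' t q q') :
    Exchange (m + n) (pack N T U) (pack N T' U') (pack N T'' U'') (pack N s t) (pack N r q)
      (pack N r' q') where
  zero_mem_r := zero_mem_pack h.zero_mem_r h'.zero_mem_r
  zero_mem_r' := zero_mem_pack h.zero_mem_r' h'.zero_mem_r'
  zero_mem_T := zero_mem_pack h.zero_mem_T h'.zero_mem_T
  zero_mem_T' := zero_mem_pack h.zero_mem_T' h'.zero_mem_T'
  zero_mem_T'' := zero_mem_pack h.zero_mem_T'' h'.zero_mem_T''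
  zero_mem_s := zero_mem_pack h.zero_mem_s h'.zero_mem_s
  add_eq := by rw [pack_add_pack, pack_add_pack, h.add_eq, h'.add_eq]
  add_eq' := by rw [pack_add_pack, pack_add_pack, h.add_eq', h'.add_eq']
  rigid_T_T' := pack_add_pack N _ _ _ _ ▸ h.rigid_T_T'.pack hTN h'.rigid_T_T'
  rigid_s_T' := pack_add_pack N _ _ _ _ ▸ h.rigid_s_T'.pack hsN h'.rigid_s_T'
  rigid_T_T'' := pack_add_pack N _ _ _ _ ▸ h.rigid_T_T''.pack hTN' h'.rigid_T_T''
  rigid_s_T'' := pack_add_pack N _ _ _ _ ▸ h.rigid_s_T''.pack hsN' h'.rigid_s_T''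
  relPrime := RelPrime.pack (fun a ha => hTN a (subset_add_of_zero_mem h.zero_mem_T' ha))
    (fun a ha => hsN a (subset_add_of_zero_mem h.zero_mem_T' ha))
    (h.rigid_T_T'.left_of_add h.zero_mem_T h.zero_mem_T')
    (h.rigid_s_T'.left_of_add h.zero_mem_s h.zero_mem_T')
    (h'.rigid_T_T'.left_of_add h'.zero_mem_T h'.zero_mem_T')
    (h'.rigid_s_T'.left_of_add h'.zero_mem_s h'.zero_mem_T') h.relPrime h'.relPrime
  relPrime' := RelPrime.pack
    (fun a ha => hTN a (add_comm T' T ▸ subset_add_of_zero_mem h.zero_mem_T ha))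
    (fun a ha => hTN' a (add_comm T'' T ▸ subset_add_of_zero_mem h.zero_mem_T ha))
    (h.rigid_T_T'.right_of_add h.zero_mem_T h.zero_mem_T')
    (h.rigid_T_T''.right_of_add h.zero_mem_T h.zero_mem_T'')
    (h'.rigid_T_T'.right_of_add h'.zero_mem_T h'.zero_mem_T')
    (h'.rigid_T_T''.right_of_add h'.zero_mem_T h'.zero_mem_T'') h.relPrime' h'.relPrime'
  mem_lengthSet := add_mem_lengthSet_pack
    (by have := hTN 0 (zero_mem_add h.zero_mem_T h.zero_mem_T'); omega)
    (h'.rigid_s_T'.left_of_add h'.zero_mem_s h'.zero_mem_T') h.mem_lengthSet h'.mem_lengthSet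

theorem exists_exchange (n : ℕ) :
    ∃ T T' T'' s r r' : Finset ℕ, Exchange (1 + n) T T' T'' s r r' := by
  induction n with
  | zero => exact ⟨_, _, _, _, _, _, exchange_zero⟩
  | succ n ih =>
    obtain ⟨T, T', T'', s, r, r', h⟩ := ih
    rw [add_comm n 1]
    exact ⟨_, _, _, _, _, _, exchange_zero.pack (N := 20) (by decide) (by decide) (by decide)
      (by decide) h⟩

/-- The set with `C` over level `0` and `D` over level `c`. -/
def twoLevel (C D : Finset ℕ) (c : ℕ) : Finset (ℕ × ℕ) := {0} ×ˢ C ∪ {c} ×ˢ D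

theorem mem_twoLevel {C D : Finset ℕ} {c t x : ℕ} :
    (t, x) ∈ twoLevel C D c ↔ t = 0 ∧ x ∈ C ∨ t = c ∧ x ∈ D := by
  simp only [twoLevel, Finset.mem_union, Finset.mem_product, Finset.mem_singleton]

theorem eq_singleton_zero_of_add_eq_twoLevel {C D : Finset ℕ} {c : ℕ} (hc : c ≠ 0) (hD : 0 ∈ D)
    (h : RelPrime C D) {X Y : Finset (ℕ × ℕ)} (hX : 0 ∈ X) (hY : 0 ∈ Y)
    (e : X + Y = twoLevel C D c) (hcY : c ∉ Y.image Prod.fst) : Y = {0} := by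
  have hYS : Y ⊆ twoLevel C D c := e ▸ add_comm Y X ▸ subset_add_of_zero_mem hX
  have hY0 : ∀ p ∈ Y, p.1 = 0 := by
    rintro ⟨t, x⟩ hp
    rcases mem_twoLevel.1 (hYS hp) with h1 | h1
    · exact h1.1
    · exact absurd (h1.1 ▸ Finset.mem_image_of_mem _ hp) hcY
  have hu : ∀ s, UniqueAdd (X.image Prod.fst) (Y.image Prod.fst) s 0 := by
    intro s a b _ hb hab
    obtain ⟨p, hp, rfl⟩ := Finset.mem_image.1 hb
    have := hY0 p hp
    omega
  have e0 := fiber_add_of_uniqueAdd (hu 0)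
  have ec := fiber_add_of_uniqueAdd (hu c)
  have f0 : fiber (twoLevel C D c) (0 + 0) = C := by
    ext x
    simp [mem_fiber, mem_twoLevel, hc.symm]
  have fc : fiber (twoLevel C D c) (c + 0) = D := by
    ext x
    simp [mem_fiber, mem_twoLevel, hc]
  rw [e, f0] at e0
  rw [e, fc] at ec
  have hXc : 0 ∈ fiber X c := by
    obtain ⟨x, hx, y, hy, exy⟩ := Finset.mem_add.1 (ec ▸ hD)
    obtain ⟨rfl, rfl⟩ : x = 0 ∧ y = 0 := by omega
    exact hx
  have hYz := h _ (mem_fiber.2 hY) ⟨_, mem_fiber.2 hX, by rw [add_comm, e0]⟩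
    ⟨_, hXc, by rw [add_comm, ec]⟩
  refine Finset.eq_singleton_iff_unique_mem.2 ⟨hY, ?_⟩
  rintro ⟨t, x⟩ hp
  obtain rfl : t = 0 := hY0 _ hp
  have := mem_fiber.2 hp
  rw [hYz, Finset.mem_singleton] at this
  rw [this]
  rfl

theorem isAtomP_twoLevel {N : ℕ} {C D : Finset ℕ} {c : ℕ} (hc : c ≠ 0) (hcN : 2 * c < N)
    (hC : 0 ∈ C) (hD : 0 ∈ D) (h : RelPrime C D) : IsAtomP ((twoLevel C D c).image (enc N)) := by
  refine ⟨zero_mem_image_enc (mem_twoLevel.2 (Or.inl ⟨rfl, hC⟩)), fun e => ?_, ?_⟩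
  · have := Finset.mem_image_of_mem (enc N)
      (mem_twoLevel.2 (Or.inr ⟨rfl, hD⟩) : (c, 0) ∈ twoLevel C D c)
    rw [e, Finset.mem_singleton, enc_apply, mul_zero, add_zero] at this
    exact hc this
  · intro X Y hX hY e
    obtain ⟨X', Y', hX', hY', rfl, rfl, e'⟩ := exists_lift_of_add_eq_image (by
      rintro ⟨t, x⟩ hp
      rcases mem_twoLevel.1 hp with ⟨rfl, -⟩ | ⟨rfl, -⟩ <;> dsimp only <;> omega) hX hY e.symm
    by_cases hcY : c ∈ Y'.image Prod.fst
    · by_cases hcX : c ∈ X'.image Prod.fst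
      · have h2 := Finset.add_mem_add hcX hcY
        rw [← image_fst_add, e'] at h2
        obtain ⟨⟨t, x⟩, hp, ht⟩ := Finset.mem_image.1 h2
        dsimp only at ht
        rcases mem_twoLevel.1 hp with ⟨h3, -⟩ | ⟨h3, -⟩ <;> omega
      · left
        rw [eq_singleton_zero_of_add_eq_twoLevel hc hD h hY' hX' (add_comm X' Y' ▸ e') hcX,
          Finset.image_singleton, map_zero]
    · right
      rw [eq_singleton_zero_of_add_eq_twoLevel hc hD h hX' hY' e' hcY, Finset.image_singleton,
        map_zero]

theorem exists_add_eq_sum_of_mem {l : Multiset (Finset ℕ)} (hl : ∀ U ∈ l, IsAtomP U) {U : Finset ℕ}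
    (hU : U ∈ l) : ∃ Y, 0 ∈ Y ∧ U + Y = l.sum := by
  obtain ⟨m, rfl⟩ := Multiset.exists_cons_of_mem hU
  exact ⟨m.sum, zero_mem_sum fun V hV => hl V (Multiset.mem_cons_of_mem hV),
    (Multiset.sum_cons U m).symm⟩

theorem card_lt_card_add {A B : Finset ℕ} (hA : 0 ∈ A) (hB : 0 ∈ B) (hB1 : B ≠ {0}) :
    A.card < (A + B).card := by
  refine Finset.card_lt_card ((subset_add_of_zero_mem hB).ssubset_of_ne fun e => hB1 ?_)
  refine Finset.eq_singleton_iff_unique_mem.2 ⟨hB, fun b hb => ?_⟩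
  have hm := A.max'_mem ⟨0, hA⟩
  have := A.le_max' _ (e.symm ▸ Finset.add_mem_add hm hb)
  omega

theorem lt_card_of_mem_lengthSet {A : Finset ℕ} {k : ℕ} (h : k ∈ LengthSet A) : k < A.card := by
  obtain ⟨l, rfl, hl, rfl⟩ := h
  induction l using Multiset.induction_on with
  | empty => simp
  | cons U l ih =>
    have hU := hl U (Multiset.mem_cons_self U l)
    have hl' : ∀ V ∈ l, IsAtomP V := fun V hV => hl V (Multiset.mem_cons_of_mem hV)
    have := card_lt_card_add (zero_mem_sum hl') hU.1 hU.2.1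
    rw [Multiset.card_cons, Multiset.sum_cons, add_comm U]
    have := ih hl'
    omega

theorem lengthSet_nonempty {A : Finset ℕ} (hA : 0 ∈ A) : (LengthSet A).Nonempty := by
  induction hn : A.card using Nat.strong_induction_on generalizing A with
  | _ n ih =>
    by_cases h1 : A = {0}
    · exact h1 ▸ ⟨0, zero_mem_lengthSet⟩
    by_cases h2 : IsAtomP A
    · exact ⟨1, one_mem_lengthSet h2⟩
    · simp only [IsAtomP, hA, h1, ne_eq, not_false_eq_true, true_and, not_forall, not_or] at h2
      obtain ⟨B, C, hB, hC, rfl, hB1, hC1⟩ := h2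
      obtain ⟨j, hj⟩ := ih _ (hn ▸ card_lt_card_add hB hC hC1) hB rfl
      obtain ⟨k, hk⟩ := ih _ (hn ▸ add_comm C B ▸ card_lt_card_add hC hB hB1) hC rfl
      exact ⟨j + k, add_mem_lengthSet hj hk⟩

/-- `A` is rigid with shortest and longest factorization lengths `m` and `M`. -/
structure HasRange (A : Finset ℕ) (m M : ℕ) : Prop where
  rigid : IsRigid A
  min_mem : m ∈ LengthSet A
  max_mem : M ∈ LengthSet A
  bounds : ∀ k ∈ LengthSet A, m ≤ k ∧ k ≤ M

theorem Exchange.exists_hasRange {n : ℕ} {T T' T'' s r r' : Finset ℕ}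
    (h : Exchange n T T' T'' s r r') : ∃ A M, n ≤ M ∧ HasRange A 2 M := by
  have hU := isAtomP_twoLevel (N := 9) one_ne_zero (by norm_num) h.zero_mem_T h.zero_mem_s
    h.relPrime
  have hV := isAtomP_twoLevel (N := 9) three_ne_zero (by norm_num) h.zero_mem_T' h.zero_mem_T''
    h.relPrime'
  have hS : twoLevel T s 1 + twoLevel T' T'' 3 = {0} ×ˢ (T + T') ∪ {1} ×ˢ (s + T') ∪
      ({3} ×ˢ (T + T'') ∪ {4} ×ˢ (s + T'')) := by
    simp only [twoLevel, Finset.union_add, Finset.add_union, Finset.product_add_product_comm,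
      Finset.singleton_add_singleton, zero_add, add_zero, Nat.reduceAdd]
  have hfst : (twoLevel T s 1 + twoLevel T' T'' 3).image Prod.fst = {0, 1, 3, 4} := by
    rw [hS]
    simp only [Finset.image_union,
      Finset.product_image_fst ⟨0, zero_mem_add h.zero_mem_T h.zero_mem_T'⟩,
      Finset.product_image_fst ⟨0, zero_mem_add h.zero_mem_s h.zero_mem_T'⟩,
      Finset.product_image_fst ⟨0, zero_mem_add h.zero_mem_T h.zero_mem_T''⟩,
      Finset.product_image_fst ⟨0, zero_mem_add h.zero_mem_s h.zero_mem_T''⟩]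
    rfl
  have hrigid : IsRigid ((twoLevel T s 1 + twoLevel T' T'' 3).image (enc 9)) := by
    refine IsRigid.image_enc (fun p hp => ?_) (IsRigid.of_fiber ?_ ?_)
    · have := hfst ▸ Finset.mem_image_of_mem Prod.fst hp
      simp only [Finset.mem_insert, Finset.mem_singleton] at this
      omega
    · rw [hfst]
      exact isRigid_of_neighbors (by decide) (by decide +kernel)
    · rw [hfst, hS]
      have hf : ∀ t B, (∀ x, (t, x) ∈ ({0} ×ˢ (T + T') ∪ {1} ×ˢ (s + T') ∪
          ({3} ×ˢ (T + T'') ∪ {4} ×ˢ (s + T'')) : Finset (ℕ × ℕ)) ↔ x ∈ B) → IsRigid B →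
          IsRigid (fiber ({0} ×ˢ (T + T') ∪ {1} ×ˢ (s + T') ∪
          ({3} ×ˢ (T + T'') ∪ {4} ×ˢ (s + T''))) t) := by
        intro t B hB hr
        rwa [show fiber _ t = B from Finset.ext fun x => mem_fiber.trans (hB x)]
      simp only [Finset.mem_insert, Finset.mem_singleton]
      rintro t (rfl | rfl | rfl | rfl)
      · exact hf _ _ (fun x => by simp) h.rigid_T_T'
      · exact hf _ _ (fun x => by simp) h.rigid_s_T'
      · exact hf _ _ (fun x => by simp) h.rigid_T_T''
      · exact hf _ _ (fun x => by simp) h.rigid_s_T''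
  rw [Finset.image_add] at hrigid
  set U := (twoLevel T s 1).image (enc 9)
  set V := (twoLevel T' T'' 3).image (enc 9)
  set F : Finset (ℕ × ℕ) := {0} ×ˢ r ∪ {1} ×ˢ T' ∪ ({3} ×ˢ r' ∪ {4} ×ˢ T'') with hF
  have hUV : U + V = _root_.pack 9 {0} s + F.image (enc 9) := by
    rw [← Finset.image_add, hS, _root_.pack, ← Finset.image_add, hF]
    simp only [Finset.add_union, Finset.product_add_product_comm,
      Finset.singleton_add_singleton, zero_add, h.add_eq, h.add_eq']
  obtain ⟨j, hj⟩ := lengthSet_nonempty (A := F.image (enc 9))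
    (zero_mem_image_enc (by simp [hF, h.zero_mem_r]))
  have hs := mem_lengthSet_pack_zero (N := 9) (by norm_num)
    (h.rigid_s_T'.left_of_add h.zero_mem_s h.zero_mem_T') h.mem_lengthSet
  have hlong : n + j ∈ LengthSet (U + V) := hUV ▸ add_mem_lengthSet hs hj
  have hbdd : BddAbove (LengthSet (U + V)) := ⟨_, fun k hk => (lt_card_of_mem_lengthSet hk).le⟩
  refine ⟨U + V, sSup (LengthSet (U + V)), (Nat.le_add_right n j).trans (le_csSup hbdd hlong),
    hrigid, add_mem_lengthSet (one_mem_lengthSet hU) (one_mem_lengthSet hV),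
    Nat.sSup_mem ⟨_, hlong⟩ hbdd, fun k hk => ⟨?_, le_csSup hbdd hk⟩⟩
  by_contra! hk2
  obtain ⟨l, rfl, hl, e⟩ := hk
  have hUc := card_lt_card_add hU.1 hV.1 hV.2.1
  have hU0 : 0 < U.card := Finset.card_pos.2 ⟨0, hU.1⟩
  interval_cases hc : Multiset.card l
  · rw [Multiset.card_eq_zero.1 hc, Multiset.sum_zero] at e
    rw [← e, Finset.card_zero] at hUc
    omega
  · obtain ⟨W, rfl⟩ := Multiset.card_eq_one.1 hc
    rw [Multiset.sum_singleton] at e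
    rcases (hl W (Multiset.mem_singleton_self W)).2.2 U V hU.1 hV.1 e with e1 | e1
    · exact hU.2.1 e1
    · exact hV.2.1 e1

theorem exists_lengths_of_sum_eq_pack {N : ℕ} {l : Multiset (Finset ℕ)}
    (hl : ∀ U ∈ l, IsAtomP U) {A B : Finset ℕ} (hN : ∀ a ∈ A, 2 * a < N) (hA : IsRigid A)
    (hB : IsRigid B) (e : l.sum = pack N A B) :
    ∃ j ∈ LengthSet A, ∃ k ∈ LengthSet B, Multiset.card l = j + k := by
  induction l using Multiset.induction_on generalizing A B with
  | empty =>
    rw [Multiset.sum_zero, ← Finset.singleton_zero, ← pack_zero_zero N] at e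
    have h0 : 0 < N := by simpa using hN 0 hA.1
    obtain ⟨rfl, rfl⟩ := pack_inj (by simpa) (fun a ha => by have := hN a ha; omega)
      (Finset.mem_singleton_self 0) (Finset.mem_singleton_self 0) e
    exact ⟨0, zero_mem_lengthSet, 0, zero_mem_lengthSet, rfl⟩
  | cons U l ih =>
    have hU := hl U (Multiset.mem_cons_self U l)
    have hl' : ∀ V ∈ l, IsAtomP V := fun V hV => hl V (Multiset.mem_cons_of_mem hV)
    rw [Multiset.sum_cons] at e
    obtain ⟨X₁, X₂, Y₁, Y₂, hX₁, hX₂, hY₁, hY₂, eU, el, rfl, rfl⟩ :=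
      hA.exists_pack_of_add_eq_pack hN hB hU.1 (zero_mem_sum hl') e
    obtain ⟨j, hj, k, hk, ejk⟩ := ih hl'
      (fun y hy => hN y (add_comm Y₁ X₁ ▸ subset_add_of_zero_mem hX₁ hy))
      (hA.right_of_add hX₁ hY₁) (hB.right_of_add hX₂ hY₂) el
    have h0 : 0 < N := by simpa using hN 0 hA.1
    have esplit : U = X₁ + pack N {0} X₂ := by
      conv_rhs => rw [← pack_zero_right N X₁]
      rw [pack_add_pack, Finset.singleton_zero, add_zero, zero_add, eU]
    have h0z : (0 : ℕ) ∈ ({0} : Finset ℕ) := Finset.mem_singleton_self 0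
    rcases hU.2.2 _ _ hX₁ (zero_mem_pack h0z hX₂) esplit with rfl | e2
    · have hat : IsAtomP X₂ := by
        refine ⟨hX₂, fun e3 => hU.2.1 (by rw [eU, e3, pack_zero_zero]), ?_⟩
        rintro P Q hP hQ rfl
        have hinj : ∀ P : Finset ℕ, 0 ∈ P → pack N {0} P = {0} → P = {0} := fun P hP h =>
          (pack_inj (by simpa) (by simpa) h0z hP (h.trans (pack_zero_zero N).symm)).2
        exact (hU.2.2 _ _ (zero_mem_pack h0z hP) (zero_mem_pack h0z hQ) (by
          rw [pack_add_pack, eU, Finset.singleton_add_singleton])).imp (hinj P hP) (hinj Q hQ)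
      refine ⟨j, ?_, 1 + k, add_mem_lengthSet (one_mem_lengthSet hat) hk, ?_⟩
      · rwa [Finset.singleton_zero, zero_add]
      · rw [Multiset.card_cons]
        omega
    · obtain rfl : X₂ = {0} :=
        (pack_inj (by simpa) (by simpa) h0z hX₂ (e2.trans (pack_zero_zero N).symm)).2
      rw [pack_zero_right] at eU
      subst eU
      refine ⟨1 + j, add_mem_lengthSet (one_mem_lengthSet hU) hj, k, ?_, ?_⟩
      · rwa [Finset.singleton_zero, zero_add]
      · rw [Multiset.card_cons]
        omega

theorem HasRange.exists_add {A B : Finset ℕ} {m M m' M' : ℕ} (hA : HasRange A m M)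
    (hB : HasRange B m' M') : ∃ C, HasRange C (m + m') (M + M') := by
  have hN : ∀ a ∈ A, 2 * a < 2 * A.sup id + 1 := fun a ha => by
    have : a ≤ A.sup id := Finset.le_sup (f := id) ha
    omega
  refine ⟨pack (2 * A.sup id + 1) A B, hA.rigid.pack hN hB.rigid,
    add_mem_lengthSet_pack (Nat.succ_pos _) hB.rigid hA.min_mem hB.min_mem,
    add_mem_lengthSet_pack (Nat.succ_pos _) hB.rigid hA.max_mem hB.max_mem, ?_⟩
  rintro _ ⟨l, rfl, hl, e⟩
  obtain ⟨j, hj, k, hk, ejk⟩ := exists_lengths_of_sum_eq_pack hl hN hA.rigid hB.rigid e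
  have := hA.bounds j hj
  have := hB.bounds k hk
  omega

theorem HasRange.exists_nsmul {A : Finset ℕ} {m M : ℕ} (h : HasRange A m M) (k : ℕ) :
    ∃ C, HasRange C (k * m) (k * M) := by
  induction k with
  | zero =>
    refine ⟨{0}, isRigid_zero, by simpa using zero_mem_lengthSet, by simpa using zero_mem_lengthSet,
      ?_⟩
    rintro _ ⟨l, rfl, hl, e⟩
    obtain rfl : l = 0 := by
      refine Multiset.eq_zero_of_forall_notMem fun U hU => (hl U hU).2.1 ?_
      obtain ⟨Y, hY, eY⟩ := exists_add_eq_sum_of_mem hl hU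
      exact (Finset.subset_singleton_iff.1 (e ▸ eY ▸ subset_add_of_zero_mem hY)).resolve_left
        (Finset.ne_empty_of_mem (hl U hU).1)
    simp
  | succ k ih =>
    obtain ⟨C, hC⟩ := ih
    rw [add_one_mul, add_one_mul]
    exact hC.exists_add h

theorem hasRange_pair : HasRange {0, 1} 1 1 := by
  refine ⟨isRigid_of_neighbors (by decide) (by decide +kernel), one_mem_lengthSet isAtomP_pair,
    one_mem_lengthSet isAtomP_pair, ?_⟩
  intro k hk
  refine ⟨Nat.one_le_iff_ne_zero.2 ?_, Nat.lt_succ_iff.1 (lt_card_of_mem_lengthSet hk)⟩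
  rintro rfl
  obtain ⟨l, hl, -, e⟩ := hk
  rw [Multiset.card_eq_zero.1 hl, Multiset.sum_zero] at e
  exact absurd e (by decide)

theorem fully_elastic (q : ℚ) (hq : 1 ≤ q) :
    ∃ A : Finset ℕ, 0 ∈ A ∧ (LengthSet A).Nonempty ∧
      ∃ M m : ℕ, M ∈ LengthSet A ∧ m ∈ LengthSet A ∧
        (∀ k ∈ LengthSet A, m ≤ k ∧ k ≤ M) ∧ (M : ℚ) / (m : ℚ) = q := by
  obtain ⟨a, ha⟩ := Int.eq_ofNat_of_zero_le (Rat.num_nonneg.2 (zero_le_one.trans hq))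
  have hb := q.den_pos
  have hab : q.den ≤ a := by
    have := Rat.le_iff 1 q |>.1 hq
    simp only [Rat.num_ofNat, Rat.den_ofNat, one_mul, Nat.cast_one, mul_one, ha] at this
    exact_mod_cast this
  obtain ⟨T, T', T'', s, r, r', h⟩ := exists_exchange (2 * a + 2)
  obtain ⟨A, M, hM, hA⟩ := h.exists_hasRange
  obtain ⟨k, rfl⟩ := Nat.exists_eq_add_of_le hab
  obtain ⟨t, rfl⟩ := Nat.exists_eq_add_of_le (show 2 ≤ M by omega)
  have hle : 2 * k ≤ t * q.den := by nlinarith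
  obtain ⟨B, hB⟩ := hA.exists_nsmul k
  obtain ⟨B', hB'⟩ := hasRange_pair.exists_nsmul (t * q.den - 2 * k)
  obtain ⟨C, hC⟩ := hB.exists_add hB'
  refine ⟨C, hC.rigid.1, ⟨_, hC.min_mem⟩, _, _, hC.max_mem, hC.min_mem, hC.bounds, ?_⟩
  rw [show k * 2 + (t * q.den - 2 * k) * 1 = t * q.den by omega,
    show k * (2 + t) + (t * q.den - 2 * k) * 1 = t * (q.den + k) by
      rw [mul_add, mul_add, mul_comm t k]; omega]
  have ht : (t : ℚ) ≠ 0 := Nat.cast_ne_zero.2 (by omega)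
  rw [Nat.cast_mul, Nat.cast_mul, mul_div_mul_left _ _ ht]
  conv_rhs => rw [← Rat.num_div_den q, ha]
  rfl
end
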